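/- arXiv:2411.01131 — 4 statements merged into one kernel-verified Lean document; each statement's English description precedes it below -/
import Mathlib

section
/- Let n ≥ 1, let a, Δx ∈ ℝ, and define v ∈ ℝ^{2ⁿ} by v_k = a + k·Δx for k ∈ {0, …, 2ⁿ−1}. Then H^{⊗n} v = β₀·e₀ + ∑_{m=0}^{n−1} β_{2^m}·e_{2^m}, where e_j is the j-th standard basis vector, β₀ = 2^{n/2}·a + 2^{n/2−1}·(2ⁿ−1)·Δx, and β_{2^m} = −2^{n/2+m−1}·Δx. In particular H^{⊗n} v is supported only on the index 0 and the indices 2^m (which have Hamming weight 1). -/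
/-- The sign appearing in the Walsh–Hadamard matrix. -/
def whSign (n i k : ℕ) : ℝ :=
  (-1 : ℝ) ^ (∑ m ∈ Finset.range n,
          (if Nat.testBit i m ∧ Nat.testBit k m then 1 else 0))

lemma whSign_even (n i k : ℕ) : whSign (n+1) i (2*k) = whSign n (i/2) k := by
  unfold whSign
  rw [Finset.sum_range_succ']
  simp [Nat.testBit_succ]

lemma whSign_odd (n i k : ℕ) :
    whSign (n+1) i (2*k+1) = (if i % 2 = 1 then -1 else 1) * whSign n (i/2) k := by
  unfold whSign
  have h : (2*k+1)/2 = k := by omega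
  rw [Finset.sum_range_succ', pow_add, mul_comm]
  simp only [Nat.testBit_succ, h]
  congr 1
  by_cases hi : i % 2 = 1 <;> simp [Nat.testBit_zero, hi]

lemma sum_range_two_mul' (N : ℕ) (f : ℕ → ℝ) :
    ∑ k ∈ Finset.range (2*N), f k = ∑ k ∈ Finset.range N, (f (2*k) + f (2*k+1)) := by
  induction N with
  | zero => simp
  | succ N ih =>
    rw [show 2*(N+1) = 2*N+1+1 by ring, Finset.sum_range_succ, Finset.sum_range_succ, ih,
      Finset.sum_range_succ]
    ring

lemma whS0 (n : ℕ) : ∀ i < 2^n, ∑ k ∈ Finset.range (2^n), whSign n i k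
    = if i = 0 then (2:ℝ)^n else 0 := by
  induction n with
  | zero => intro i hi; simp at hi; simp [hi, whSign]
  | succ n ih =>
    intro i hi
    rw [pow_succ] at hi
    rw [pow_succ, mul_comm, sum_range_two_mul']
    simp only [whSign_even, whSign_odd]
    rw [Finset.sum_add_distrib, ← Finset.mul_sum, ih (i/2) (by omega)]
    rcases Nat.even_or_odd' i with ⟨j, rfl | rfl⟩
    · simp only [show 2*j/2 = j by omega, show 2*j%2 = 0 by omega, show 2*j=0 ↔ j=0 by omega]
      split_ifs <;> simp_all <;> ring
    · simp
      split_ifs <;> simp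

lemma whS1 (n : ℕ) : ∀ i < 2^n, ∑ k ∈ Finset.range (2^n), whSign n i k * (k:ℝ)
    = (if i = 0 then (2:ℝ)^n * (2^n-1)/2 else 0)
      - ∑ m ∈ Finset.range n, if i = 2^m then (2:ℝ)^n * 2^m/2 else 0 := by
  induction n with
  | zero => intro i hi; simp
  | succ n ih =>
    intro i hi
    rw [pow_succ] at hi
    have e : ∑ k ∈ Finset.range (2^(n+1)), whSign (n+1) i k * (k:ℝ)
      = 2 * (1 + (if i % 2 = 1 then -1 else 1)) * (∑ k ∈ Finset.range (2^n), whSign n (i/2) k * (k:ℝ))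
        + (if i % 2 = 1 then -1 else 1) * ∑ k ∈ Finset.range (2^n), whSign n (i/2) k := by
      rw [pow_succ, mul_comm, sum_range_two_mul']
      simp only [whSign_even, whSign_odd]
      rw [Finset.mul_sum, Finset.mul_sum, ← Finset.sum_add_distrib]
      refine Finset.sum_congr rfl fun k _ => ?_
      push_cast
      ring
    rw [e, ih (i/2) (by omega), whS0 n (i/2) (by omega), Finset.sum_range_succ']
    rcases Nat.even_or_odd' i with ⟨j, rfl | rfl⟩
    · have h2 : ∀ m, (2*j = 2^(m+1) ↔ j = 2^m) := by intro m; rw [pow_succ]; omega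
      have h3 : ¬ (2*j = 2^0) := by simp
      simp only [show 2*j/2 = j by omega, show 2*j%2 = 0 by omega, show 2*j=0 ↔ j=0 by omega,
        h2, h3, if_false]
      have : ∑ m ∈ Finset.range n, (if j = 2^m then (2:ℝ)^(n+1) * 2^(m+1)/2 else 0)
        = 4 * ∑ m ∈ Finset.range n, (if j = 2^m then (2:ℝ)^n * 2^m/2 else 0) := by
        rw [Finset.mul_sum]
        refine Finset.sum_congr rfl fun k _ => ?_
        split_ifs <;> ring
      rw [this]
      generalize (∑ m ∈ Finset.range n, (if j = 2^m then (2:ℝ)^n * 2^m/2 else 0)) = S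
      by_cases hj : j = 0
      · simp only [hj, if_true, zero_ne_one, if_false]; ring
      · simp only [hj, zero_ne_one, if_false]; ring
    · have h2 : ∀ m, ¬ (2*j+1 = 2^(m+1)) := by intro m; rw [pow_succ]; omega
      simp only [show (2*j+1)/2 = j by omega, show (2*j+1)%2 = 1 by omega, h2, if_false]
      by_cases hj : j = 0
      · simp [hj]; ring
      · simp [hj]

open Finset in
/-- The Walsh–Hadamard transform of the linear vector
`v_k = a + k·Δx` is supported on the index `0` (with coefficient
`2^{n/2}·a + 2^{n/2−1}(2ⁿ−1)·Δx`) and on the Hamming-weight-one indices `2^m`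
(with coefficients `−2^{n/2+m−1}·Δx`). -/
theorem walsh_hadamard_of_linear_vector (n : ℕ) (hn : 1 ≤ n) (a Δx : ℝ)
    (v : Fin (2 ^ n) → ℝ) (hv : ∀ k : Fin (2 ^ n), v k = a + (k : ℕ) * Δx)
    (Hn : Matrix (Fin (2 ^ n)) (Fin (2 ^ n)) ℝ)
    (hH : ∀ i κ : Fin (2 ^ n), Hn i κ =
      (Real.sqrt (2 ^ n))⁻¹ *
        (-1 : ℝ) ^ (∑ m ∈ Finset.range n,
          (if Nat.testBit (i : ℕ) m ∧ Nat.testBit (κ : ℕ) m then 1 else 0))) :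
    Hn.mulVec v =
      (Real.sqrt (2 ^ n) * a + Real.sqrt (2 ^ n) / 2 * ((2 : ℝ) ^ n - 1) * Δx) •
          (Pi.single (0 : Fin (2 ^ n)) 1 : Fin (2 ^ n) → ℝ)
        + ∑ m : Fin n,
            (-(Real.sqrt (2 ^ n) * 2 ^ (m : ℕ) / 2 * Δx)) •
              (Pi.single (⟨2 ^ (m : ℕ),
                Nat.pow_lt_pow_right one_lt_two m.isLt⟩ : Fin (2 ^ n)) 1 :
                  Fin (2 ^ n) → ℝ) := by
  have hs : Real.sqrt (2 ^ n) * Real.sqrt (2 ^ n) = 2 ^ n :=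
    Real.mul_self_sqrt (by positivity)
  have hp : Real.sqrt (2 ^ n) ≠ 0 := by positivity
  funext i
  have key : (Hn.mulVec v) i = (Real.sqrt (2 ^ n))⁻¹ *
      (a * (∑ k ∈ Finset.range (2 ^ n), whSign n i k)
        + Δx * ∑ k ∈ Finset.range (2 ^ n), whSign n i k * (k : ℝ)) := by
    rw [Finset.mul_sum, Finset.mul_sum, ← Finset.sum_add_distrib, Finset.mul_sum,
      Finset.sum_range, Matrix.mulVec, dotProduct]
    refine Finset.sum_congr rfl fun k _ => ?_
    rw [hH, hv]
    unfold whSign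
    ring
  have h0 : (i = 0) ↔ ((i : ℕ) = 0) := by rw [Fin.ext_iff]; simp
  rw [key, whS0 n i i.isLt, whS1 n i i.isLt, Finset.sum_range]
  simp only [Pi.add_apply, Pi.smul_apply, Finset.sum_apply, Pi.single_apply, smul_eq_mul,
    Fin.ext_iff, h0, mul_ite, mul_one, mul_zero]
  have hsum : (∑ m : Fin n, if (i : ℕ) = 2 ^ (m : ℕ) then
        -(Real.sqrt (2 ^ n) * 2 ^ (m : ℕ) / 2 * Δx) else 0)
      = -((Real.sqrt (2 ^ n))⁻¹ * Δx * ∑ m : Fin n,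
        if (i : ℕ) = 2 ^ (m : ℕ) then (2 : ℝ) ^ n * 2 ^ (m : ℕ) / 2 else 0) := by
    rw [Finset.mul_sum, ← Finset.sum_neg_distrib]
    refine Finset.sum_congr rfl fun m _ => ?_
    split_ifs
    · field_simp
      linear_combination (-Δx) * hs
    · simp
  rw [hsum]
  generalize (∑ m : Fin n, if (i : ℕ) = 2 ^ (m : ℕ) then (2 : ℝ) ^ n * 2 ^ (m : ℕ) / 2 else 0) = S
  have hi : (Real.sqrt (2 ^ n))⁻¹ * 2 ^ n = Real.sqrt (2 ^ n) := by
    field_simp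
    linear_combination -hs
  split_ifs
  · linear_combination (a + Δx * (2 ^ n - 1) / 2) * hi
  · ring
end

section
/- Let h ≥ 1, let U_S be a unitary 2^h × 2^h complex matrix with first column ψ = U_S e₀, let p ∈ {0,1}, and let W_p, G_p be the operators on ℂ^{2^h} ⊗ ℂ² ⊗ ℂ^{2^h} defined by W_p = H̃·S̃^p·U_Copy·U_C^S·H̃ and G_p = W_p·R·W_p†·Z̃ (with H̃, S̃, Z̃, R, U_C^S, U_Copy as in the context). Define on ℂ² ⊗ (ℂ^{2^h} ⊗ ℂ² ⊗ ℂ^{2^h}) the operator U^{(S)}_{(p)} = ((XZX) ⊗ I)·(H ⊗ W_p†)·(|0⟩⟨0| ⊗ G_p + |1⟩⟨1| ⊗ G_p†)·(H ⊗ W_p), where X = [[0,1],[1,0]], Z = diag(1,−1), H = (1/√2)[[1,1],[1,−1]] act on the first qubit. Then U^{(S)}_{(p)} is unitary, and for every k ∈ {0, …, 2^h−1}, writing U^{(S)}_{(p)}(e₀ ⊗ e₀ ⊗ e₀ ⊗ e_k) = e₀ ⊗ u + e₁ ⊗ w with u, w ∈ ℂ^{2^h} ⊗ ℂ² ⊗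 ℂ^{2^h}, one has exactly u = Re((−i)^p ψ_k) · (e₀ ⊗ e₀ ⊗ e_k). In particular (⟨0| ⊗ I) U^{(S)}_{(p)} (|0⟩ ⊗ I), restricted to the subspace spanned by the vectors e₀ ⊗ e₀ ⊗ e_k, acts diagonally with entries Re((−i)^p ψ_k), and the h+1 middle registers return to the state e₀ ⊗ e₀. -/
namespace DiagBlockEncoding

open Matrix

/-- The index type of the space `ℂ^{2^h} ⊗ ℂ² ⊗ ℂ^{2^h}`. -/
abbrev Ix (h : ℕ) := Fin (2 ^ h) × Fin 2 × Fin (2 ^ h)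

/-- The Hadamard gate `H = (1/√2)[[1,1],[1,−1]]`. -/
noncomputable def Hgate : Matrix (Fin 2) (Fin 2) ℂ :=
  (Real.sqrt 2 : ℂ)⁻¹ • !![1, 1; 1, -1]

/-- The phase gate `S = diag(1, i)`. -/
def Sgate : Matrix (Fin 2) (Fin 2) ℂ := !![1, 0; 0, Complex.I]

/-- The gate `Z = diag(1, −1)`. -/
def Zgate : Matrix (Fin 2) (Fin 2) ℂ := !![1, 0; 0, -1]

/-- `H̃ = I ⊗ H ⊗ I`. -/
noncomputable def Htil (h : ℕ) : Matrix (Ix h) (Ix h) ℂ :=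
  Matrix.of fun x y =>
    if x.1 = y.1 ∧ x.2.2 = y.2.2 then Hgate x.2.1 y.2.1 else 0

/-- `S̃ = I ⊗ S ⊗ I`. -/
def Stil (h : ℕ) : Matrix (Ix h) (Ix h) ℂ :=
  Matrix.of fun x y =>
    if x.1 = y.1 ∧ x.2.2 = y.2.2 then Sgate x.2.1 y.2.1 else 0

/-- `Z̃ = I ⊗ Z ⊗ I`. -/
def Ztil (h : ℕ) : Matrix (Ix h) (Ix h) ℂ :=
  Matrix.of fun x y =>
    if x.1 = y.1 ∧ x.2.2 = y.2.2 then Zgate x.2.1 y.2.1 else 0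

/-- `R = (I − 2·Π₀) ⊗ I`, where `Π₀` projects onto `e₀ ⊗ e₀` of the first two
registers. -/
def Rop (h : ℕ) : Matrix (Ix h) (Ix h) ℂ :=
  Matrix.of fun x y =>
    if x.2.2 = y.2.2 then
      (if x.1 = y.1 ∧ x.2.1 = y.2.1 then 1 else 0) -
        2 * (if x.1 = 0 ∧ x.2.1 = 0 ∧ y.1 = 0 ∧ y.2.1 = 0 then 1 else 0)
    else 0

/-- `U_C^S = (U_S ⊗ |0⟩⟨0| + I ⊗ |1⟩⟨1|) ⊗ I`: apply `U_S` to the first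
register controlled on the middle qubit being `|0⟩`. -/
def UCS (h : ℕ) (U : Matrix (Fin (2 ^ h)) (Fin (2 ^ h)) ℂ) :
    Matrix (Ix h) (Ix h) ℂ :=
  Matrix.of fun x y =>
    if x.2.2 = y.2.2 then
      (if x.2.1 = 0 ∧ y.2.1 = 0 then U x.1 y.1 else 0) +
        (if x.1 = y.1 ∧ x.2.1 = 1 ∧ y.2.1 = 1 then 1 else 0)
    else 0

/-- `U_Copy`: controlled on the middle qubit being `|1⟩`, XOR the last register
into the first one: `e_j ⊗ e₁ ⊗ e_k ↦ e_{j⊕k} ⊗ e₁ ⊗ e_k`. -/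
def UCopy (h : ℕ) : Matrix (Ix h) (Ix h) ℂ :=
  Matrix.of fun x y =>
    if x.2.1 = y.2.1 ∧ x.2.2 = y.2.2 ∧
        (x.1 : ℕ) = (if y.2.1 = 1 then (y.1 : ℕ) ^^^ (y.2.2 : ℕ) else (y.1 : ℕ))
    then 1 else 0

/-- `W_p = H̃ · S̃^p · U_Copy · U_C^S · H̃`. -/
noncomputable def Wop (h : ℕ) (U : Matrix (Fin (2 ^ h)) (Fin (2 ^ h)) ℂ)
    (p : ℕ) : Matrix (Ix h) (Ix h) ℂ :=
  Htil h * (Stil h) ^ p * UCopy h * UCS h U * Htil h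

/-- `G_p = W_p · R · W_p† · Z̃`. -/
noncomputable def Gop (h : ℕ) (U : Matrix (Fin (2 ^ h)) (Fin (2 ^ h)) ℂ)
    (p : ℕ) : Matrix (Ix h) (Ix h) ℂ :=
  Wop h U p * Rop h * (Wop h U p)ᴴ * Ztil h

/-- The basis vector `e₀ ⊗ e₀ ⊗ e_k` of `ℂ^{2^h} ⊗ ℂ² ⊗ ℂ^{2^h}`. -/
def eVec (h : ℕ) (k : Fin (2 ^ h)) : Ix h → ℂ :=
  fun x => if x = (0, 0, k) then 1 else 0

/-- The gate `X = [[0,1],[1,0]]`. -/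
def Xgate : Matrix (Fin 2) (Fin 2) ℂ := !![0, 1; 1, 0]

/-- Tensor product of a one-qubit gate with an operator on
`ℂ^{2^h} ⊗ ℂ² ⊗ ℂ^{2^h}`. -/
def qTens (h : ℕ) (A : Matrix (Fin 2) (Fin 2) ℂ) (B : Matrix (Ix h) (Ix h) ℂ) :
    Matrix (Fin 2 × Ix h) (Fin 2 × Ix h) ℂ :=
  Matrix.of fun x y => A x.1 y.1 * B x.2 y.2

/-- The controlled choice `|0⟩⟨0| ⊗ A + |1⟩⟨1| ⊗ B`. -/
def ctrlChoice (h : ℕ) (A B : Matrix (Ix h) (Ix h) ℂ) :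
    Matrix (Fin 2 × Ix h) (Fin 2 × Ix h) ℂ :=
  Matrix.of fun x y =>
    if x.1 = 0 ∧ y.1 = 0 then A x.2 y.2
    else if x.1 = 1 ∧ y.1 = 1 then B x.2 y.2
    else 0

/-- `U^{(S)}_{(p)} = ((XZX) ⊗ I)·(H ⊗ W_p†)·(|0⟩⟨0| ⊗ G_p + |1⟩⟨1| ⊗ G_p†)·(H ⊗ W_p)`. -/
noncomputable def USp (h : ℕ) (U : Matrix (Fin (2 ^ h)) (Fin (2 ^ h)) ℂ)
    (p : ℕ) : Matrix (Fin 2 × Ix h) (Fin 2 × Ix h) ℂ :=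
  qTens h (Xgate * Zgate * Xgate) 1 * qTens h Hgate (Wop h U p)ᴴ *
    ctrlChoice h (Gop h U p) (Gop h U p)ᴴ * qTens h Hgate (Wop h U p)

lemma Htil_mul (h : ℕ) (M : Matrix (Ix h) (Ix h) ℂ) (x y : Ix h) :
    (Htil h * M) x y = Hgate x.2.1 0 * M (x.1, 0, x.2.2) y
      + Hgate x.2.1 1 * M (x.1, 1, x.2.2) y := by
  obtain ⟨j, q, k⟩ := x
  simp [Matrix.mul_apply, Htil, Fintype.sum_prod_type, ite_and, Fin.sum_univ_two]

lemma UCS_mul (h : ℕ) (U : Matrix (Fin (2 ^ h)) (Fin (2 ^ h)) ℂ)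
    (M : Matrix (Ix h) (Ix h) ℂ) (x y : Ix h) :
    (UCS h U * M) x y = if x.2.1 = 0 then ∑ j, U x.1 j * M (j, 0, x.2.2) y
      else M x y := by
  obtain ⟨j, q, k⟩ := x
  fin_cases q <;>
  simp [Matrix.mul_apply, UCS, Fintype.sum_prod_type, ite_and, Fin.sum_univ_two]

/-- the involution underlying `UCopy` -/
def cpy (h : ℕ) (x : Ix h) : Ix h :=
  (if x.2.1 = 1 then ⟨(x.1 : ℕ) ^^^ (x.2.2 : ℕ), Nat.xor_lt_two_pow x.1.2 x.2.2.2⟩ else x.1,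
    x.2.1, x.2.2)

lemma cpy_cpy (h : ℕ) (x : Ix h) : cpy h (cpy h x) = x := by
  obtain ⟨j, q, k⟩ := x
  fin_cases q <;> simp [cpy, Nat.xor_assoc]

lemma UCopy_eq (h : ℕ) (x y : Ix h) : UCopy h x y = if y = cpy h x then 1 else 0 := by
  have : y = cpy h x ↔ x = cpy h y := by
    constructor <;> (rintro rfl; rw [cpy_cpy])
  simp only [this]
  obtain ⟨j, q, k⟩ := x
  obtain ⟨j', q', k'⟩ := y
  simp only [UCopy, Matrix.of_apply, cpy, Prod.mk.injEq]
  congr 1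
  by_cases hq : q' = 1 <;> simp [hq, Fin.ext_iff] <;> tauto

lemma UCopy_mul (h : ℕ) (M : Matrix (Ix h) (Ix h) ℂ) (x y : Ix h) :
    (UCopy h * M) x y = M (cpy h x) y := by
  simp [Matrix.mul_apply, UCopy_eq]

lemma UCopy_unit (h : ℕ) : UCopy h * (UCopy h)ᴴ = 1 := by
  ext x y
  rw [UCopy_mul, conjTranspose_apply, UCopy_eq, Matrix.one_apply]
  have : cpy h x = cpy h y ↔ x = y :=
    ⟨fun e => by rw [← cpy_cpy h x, e, cpy_cpy], fun e => by rw [e]⟩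
  simp [this]

lemma UCS_unit (h : ℕ) (U : Matrix (Fin (2 ^ h)) (Fin (2 ^ h)) ℂ) (hU : U * Uᴴ = 1) :
    UCS h U * (UCS h U)ᴴ = 1 := by
  ext x y
  rw [UCS_mul]
  obtain ⟨j, q, k⟩ := x
  obtain ⟨j', q', k'⟩ := y
  have h1 := congrFun (congrFun hU j) j'
  simp only [Matrix.mul_apply, conjTranspose_apply, Matrix.one_apply] at h1
  fin_cases q <;> fin_cases q' <;> by_cases hk : k = k' <;>
    simp [UCS, Matrix.one_apply, hk, eq_comm] <;> first | (simpa [eq_comm] using h1) | skip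
  all_goals simp [eq_comm] at hk ⊢
  all_goals tauto

lemma sq2 : ((Real.sqrt 2 : ℂ))⁻¹ * ((Real.sqrt 2 : ℂ))⁻¹ = 1 / 2 := by
  rw [← mul_inv, ← Complex.ofReal_mul, Real.mul_self_sqrt (by norm_num)]; norm_num

lemma H_unit : Hgate * Hgateᴴ = 1 := by
  ext i j
  fin_cases i <;> fin_cases j <;>
    simp [Hgate, Matrix.mul_apply, Fin.sum_univ_two, sq2] <;> norm_num

lemma Htil_kron (h : ℕ) : Htil h = kroneckerMap (· * ·) (1 : Matrix (Fin (2 ^ h)) (Fin (2 ^ h)) ℂ)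
    (kroneckerMap (· * ·) Hgate (1 : Matrix (Fin (2 ^ h)) (Fin (2 ^ h)) ℂ)) := by
  ext x y
  simp only [Htil, Matrix.of_apply, kroneckerMap_apply, Matrix.one_apply]
  by_cases h1 : x.1 = y.1 <;> by_cases h2 : x.2.2 = y.2.2 <;> simp [h1, h2]

lemma Htil_unit (h : ℕ) : Htil h * (Htil h)ᴴ = 1 := by
  rw [Htil_kron, conjTranspose_kronecker, conjTranspose_kronecker, ← mul_kronecker_mul,
    ← mul_kronecker_mul, H_unit]
  simp

lemma Ztil_eq (h : ℕ) : Ztil h = diagonal (fun x => if x.2.1 = 0 then 1 else -1) := by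
  ext ⟨j, q, k⟩ ⟨j', q', k'⟩
  fin_cases q <;> fin_cases q' <;> simp [Ztil, Zgate, diagonal_apply]

lemma Stil_eq (h : ℕ) : Stil h = diagonal (fun x => if x.2.1 = 0 then 1 else Complex.I) := by
  ext ⟨j, q, k⟩ ⟨j', q', k'⟩
  fin_cases q <;> fin_cases q' <;> simp [Stil, Sgate, diagonal_apply]

lemma Rop_eq (h : ℕ) : Rop h = diagonal (fun x => if x.1 = 0 ∧ x.2.1 = 0 then -1 else 1) := by
  ext ⟨j, q, k⟩ ⟨j', q', k'⟩
  by_cases hk : k = k'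
  · by_cases hj : j = j'
    · by_cases hq : q = q'
      · subst hk hj hq
        by_cases h1 : j = 0 <;> by_cases h2 : q = 0 <;> simp [Rop, h1, h2]; norm_num
      · simp [Rop, diagonal_apply, hk, hj, hq]
        rintro - rfl - rfl; exact hq rfl
    · simp [Rop, diagonal_apply, hk, hj]
      rintro rfl - rfl; exact absurd rfl hj
  · simp [Rop, diagonal_apply, hk]

lemma Spow_eq (h p : ℕ) :
    Stil h ^ p = diagonal (fun x => if x.2.1 = 0 then 1 else Complex.I ^ p) := by
  rw [Stil_eq, diagonal_pow]
  congr 1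
  ext x
  by_cases hx : x.2.1 = 0 <;> simp [hx]

lemma Z_unit (h : ℕ) : Ztil h * (Ztil h)ᴴ = 1 := by
  rw [Ztil_eq, diagonal_conjTranspose, diagonal_mul_diagonal, ← diagonal_one]
  congr 1
  ext x
  by_cases hx : x.2.1 = 0 <;> simp [hx]

lemma R_unit (h : ℕ) : Rop h * (Rop h)ᴴ = 1 := by
  rw [Rop_eq, diagonal_conjTranspose, diagonal_mul_diagonal, ← diagonal_one]
  congr 1
  ext x
  by_cases hx : x.1 = 0 ∧ x.2.1 = 0 <;> simp [hx]

lemma S_unit (h p : ℕ) : Stil h ^ p * (Stil h ^ p)ᴴ = 1 := by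
  rw [Spow_eq, diagonal_conjTranspose, diagonal_mul_diagonal, ← diagonal_one]
  congr 1
  ext x
  by_cases hx : x.2.1 = 0 <;> simp [hx, ← mul_pow]

lemma mul_unit {n : Type*} [Fintype n] [DecidableEq n] {A B : Matrix n n ℂ}
    (hA : A * Aᴴ = 1) (hB : B * Bᴴ = 1) : (A * B) * (A * B)ᴴ = 1 := by
  rw [conjTranspose_mul, Matrix.mul_assoc, ← Matrix.mul_assoc B, hB, Matrix.one_mul, hA]

lemma ct_unit {n : Type*} [Fintype n] [DecidableEq n] {A : Matrix n n ℂ}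
    (hA : A * Aᴴ = 1) : Aᴴ * Aᴴᴴ = 1 := by
  rw [conjTranspose_conjTranspose]; exact mul_eq_one_comm.mp hA

lemma W_unit (h : ℕ) (U : Matrix (Fin (2 ^ h)) (Fin (2 ^ h)) ℂ) (hU : U * Uᴴ = 1) (p : ℕ) :
    Wop h U p * (Wop h U p)ᴴ = 1 :=
  mul_unit (mul_unit (mul_unit (mul_unit (Htil_unit h) (S_unit h p)) (UCopy_unit h))
    (UCS_unit h U hU)) (Htil_unit h)

lemma G_unit (h : ℕ) (U : Matrix (Fin (2 ^ h)) (Fin (2 ^ h)) ℂ) (hU : U * Uᴴ = 1) (p : ℕ) :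
    Gop h U p * (Gop h U p)ᴴ = 1 :=
  mul_unit (mul_unit (mul_unit (W_unit h U hU p) (R_unit h)) (ct_unit (W_unit h U hU p)))
    (Z_unit h)

lemma qTens_mul (h : ℕ) (A A' : Matrix (Fin 2) (Fin 2) ℂ) (B B' : Matrix (Ix h) (Ix h) ℂ) :
    qTens h A B * qTens h A' B' = qTens h (A * A') (B * B') :=
  (mul_kronecker_mul A A' B B').symm

lemma qTens_ct (h : ℕ) (A : Matrix (Fin 2) (Fin 2) ℂ) (B : Matrix (Ix h) (Ix h) ℂ) :
    (qTens h A B)ᴴ = qTens h Aᴴ Bᴴ := conjTranspose_kronecker A B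

lemma qTens_one (h : ℕ) : qTens h 1 1 = 1 := one_kronecker_one

lemma qTens_unit (h : ℕ) {A : Matrix (Fin 2) (Fin 2) ℂ} {B : Matrix (Ix h) (Ix h) ℂ}
    (hA : A * Aᴴ = 1) (hB : B * Bᴴ = 1) : qTens h A B * (qTens h A B)ᴴ = 1 := by
  rw [qTens_ct, qTens_mul, hA, hB, qTens_one]

lemma ctrl_eq (h : ℕ) (A B : Matrix (Ix h) (Ix h) ℂ) :
    ctrlChoice h A B = qTens h !![1, 0; 0, 0] A + qTens h !![0, 0; 0, 1] B := by
  ext ⟨a, x⟩ ⟨b, y⟩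
  fin_cases a <;> fin_cases b <;> simp [ctrlChoice, qTens]

lemma ctrl_unit (h : ℕ) {A B : Matrix (Ix h) (Ix h) ℂ}
    (hA : A * Aᴴ = 1) (hB : B * Bᴴ = 1) :
    ctrlChoice h A B * (ctrlChoice h A B)ᴴ = 1 := by
  rw [ctrl_eq, conjTranspose_add, qTens_ct, qTens_ct, Matrix.add_mul, Matrix.mul_add,
    Matrix.mul_add, qTens_mul, qTens_mul, qTens_mul, qTens_mul, hA, hB]
  ext ⟨a, x⟩ ⟨b, y⟩
  fin_cases a <;> fin_cases b <;>
    simp [qTens, Matrix.mul_apply, Fin.sum_univ_two, Matrix.one_apply]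

lemma XZX_eq : Xgate * Zgate * Xgate = !![-1, 0; 0, 1] := by
  ext i j
  fin_cases i <;> fin_cases j <;> simp [Xgate, Zgate, Matrix.mul_apply, Fin.sum_univ_two]

lemma XZX_unit : (Xgate * Zgate * Xgate) * (Xgate * Zgate * Xgate)ᴴ = 1 := by
  rw [XZX_eq]
  ext i j
  fin_cases i <;> fin_cases j <;> simp [Matrix.mul_apply, Fin.sum_univ_two]

lemma USp_unit (h : ℕ) (U : Matrix (Fin (2 ^ h)) (Fin (2 ^ h)) ℂ) (hU : U * Uᴴ = 1) (p : ℕ) :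
    USp h U p * (USp h U p)ᴴ = 1 :=
  mul_unit (mul_unit (mul_unit (qTens_unit h XZX_unit (by simp))
    (qTens_unit h H_unit (ct_unit (W_unit h U hU p))))
    (ctrl_unit h (G_unit h U hU p) (ct_unit (G_unit h U hU p))))
    (qTens_unit h H_unit (W_unit h U hU p))

lemma W_col (h : ℕ) (U : Matrix (Fin (2 ^ h)) (Fin (2 ^ h)) ℂ) (p : ℕ)
    (k : Fin (2 ^ h)) (x : Ix h) :
    Wop h U p x (0, 0, k) = if x.2.2 = k then
      (1 / 2) * (U x.1 0 + (if x.2.1 = 0 then 1 else -1) *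
        (if x.1 = k then Complex.I ^ p else 0)) else 0 := by
  obtain ⟨j, q, l⟩ := x
  have hcol : ∀ x : Ix h, Htil h x (0, 0, k) =
      if x.1 = 0 ∧ x.2.2 = k then (Real.sqrt 2 : ℂ)⁻¹ else 0 := by
    rintro ⟨j, q, l⟩
    fin_cases q <;> simp [Htil, Hgate]
  have hx : (⟨(j : ℕ) ^^^ (l : ℕ), Nat.xor_lt_two_pow j.2 l.2⟩ : Fin (2 ^ h)) = 0 ↔ j = l := by
    simp [Fin.ext_iff]
  rw [Wop, Matrix.mul_assoc, Matrix.mul_assoc, Matrix.mul_assoc, Htil_mul, Spow_eq,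
    diagonal_mul, diagonal_mul, UCopy_mul, UCopy_mul, UCS_mul, UCS_mul]
  simp only [cpy, hcol]
  by_cases hl : l = k
  · subst hl
    by_cases hj : j = l
    · fin_cases q <;> simp [hj, Hgate]
      · linear_combination (U l 0 + Complex.I ^ p) * sq2
      · linear_combination (U l 0 - Complex.I ^ p) * sq2
    · fin_cases q <;> simp [hx, hj, Hgate] <;> linear_combination (U j 0) * sq2
  · simp [hl]

lemma block (h : ℕ) (U : Matrix (Fin (2 ^ h)) (Fin (2 ^ h)) ℂ) (hU : U * Uᴴ = 1) (p : ℕ)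
    (z y : Ix h) : USp h U p (0, z) (0, y) =
      -(1 / 2) * ((Rop h * ((Wop h U p)ᴴ * Ztil h * Wop h U p)) z y
        + (((Wop h U p)ᴴ * Ztil h * Wop h U p) * Rop h) z y) := by
  have hW : (Wop h U p)ᴴ * Wop h U p = 1 := mul_eq_one_comm.mp (W_unit h U hU p)
  have hR : (Rop h)ᴴ = Rop h := by
    rw [Rop_eq, diagonal_conjTranspose]
    congr 1
    ext x
    by_cases hx : x.1 = 0 ∧ x.2.1 = 0 <;> simp [hx]
  have hZ : (Ztil h)ᴴ = Ztil h := by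
    rw [Ztil_eq, diagonal_conjTranspose]
    congr 1
    ext x
    by_cases hx : x.2.1 = 0 <;> simp [hx]
  have e1 : (Wop h U p)ᴴ * Gop h U p * Wop h U p =
      Rop h * ((Wop h U p)ᴴ * Ztil h * Wop h U p) := by
    simp only [Gop, ← Matrix.mul_assoc, hW, Matrix.one_mul]
  have e2 : (Wop h U p)ᴴ * (Gop h U p)ᴴ * Wop h U p =
      ((Wop h U p)ᴴ * Ztil h * Wop h U p) * Rop h := by
    simp only [Gop, conjTranspose_mul, conjTranspose_conjTranspose, hR, hZ, Matrix.mul_assoc, hW,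
      Matrix.mul_one]
  rw [USp, XZX_eq, ctrl_eq, qTens_mul, Matrix.mul_add, Matrix.add_mul, qTens_mul, qTens_mul,
    qTens_mul, qTens_mul, Matrix.one_mul, e1, e2, Matrix.add_apply]
  simp only [qTens, Matrix.of_apply]
  simp [Matrix.mul_apply (M := !![_, _; _, _]), Matrix.mul_apply (N := Hgate), Hgate, Fin.sum_univ_two]
  linear_combination (-((Rop h * ((Wop h U p)ᴴ * Ztil h * Wop h U p)) z y
        + (((Wop h U p)ᴴ * Ztil h * Wop h U p) * Rop h) z y)) * sq2

lemma expect (h : ℕ) (U : Matrix (Fin (2 ^ h)) (Fin (2 ^ h)) ℂ) (p : ℕ)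
    (l k : Fin (2 ^ h)) : ((Wop h U p)ᴴ * Ztil h * Wop h U p) (0, 0, l) (0, 0, k) =
      if l = k then (((((-Complex.I) ^ p * U k 0).re : ℝ)) : ℂ) else 0 := by
  rw [Matrix.mul_assoc, Ztil_eq, Matrix.mul_apply]
  simp only [diagonal_mul, conjTranspose_apply, W_col]
  by_cases hl : l = k
  · subst hl
    have key : ∀ j : Fin (2 ^ h), ∀ d : ℂ,
        star ((1 / 2 : ℂ) * (U j 0 + 1 * d)) * (1 * ((1 / 2 : ℂ) * (U j 0 + 1 * d))) +
        star ((1 / 2 : ℂ) * (U j 0 + -1 * d)) * (-1 * ((1 / 2 : ℂ) * (U j 0 + -1 * d))) =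
        (((star d * U j 0).re : ℝ) : ℂ) := by
      intro j d
      rw [Complex.re_eq_add_conj]
      simp
      ring
    have hI : (-Complex.I) ^ p = star (Complex.I ^ p) := by simp
    rw [if_pos rfl, Fintype.sum_prod_type, hI, Finset.sum_eq_single l]
    · rw [← key]
      have h2 : (starRingEnd ℂ) 2 = 2 := Complex.conj_ofNat 2
      simp [Fintype.sum_prod_type, Fin.sum_univ_two, h2]
    · intro j _ hj
      have := key j 0
      simp [Fintype.sum_prod_type, Fin.sum_univ_two, hj] at this ⊢
    · simp
  · rw [if_neg hl]
    apply Finset.sum_eq_zero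
    intro x _
    by_cases h1 : x.2.2 = l
    · have : x.2.2 ≠ k := by rw [h1]; exact hl
      simp [this]
    · simp [h1]

/-- block-encoding of `Re((−i)^p ψ_k)`. The operator
`U^{(S)}_{(p)}` is unitary, and the component of `U^{(S)}_{(p)}(e₀ ⊗ e₀ ⊗ e₀ ⊗ e_k)`
on the first qubit being `|0⟩` is exactly `Re((−i)^p ψ_k) · (e₀ ⊗ e₀ ⊗ e_k)`;
in particular the `h+1` middle registers return to the state `e₀ ⊗ e₀`. -/
theorem USp_unitary_and_block (h : ℕ) (hh : 1 ≤ h)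
    (U : Matrix (Fin (2 ^ h)) (Fin (2 ^ h)) ℂ)
    (hU₁ : U * Uᴴ = 1) (hU₂ : Uᴴ * U = 1) (p : ℕ) (hp : p ≤ 1) :
    (USp h U p * (USp h U p)ᴴ = 1 ∧ (USp h U p)ᴴ * USp h U p = 1) ∧
    ∀ k : Fin (2 ^ h), ∀ z : Ix h,
      (USp h U p).mulVec (fun x => if x = (0, (0, 0, k)) then 1 else 0) (0, z) =
        ((((-Complex.I) ^ p * U k 0).re : ℂ)) * eVec h k z := by
  refine ⟨⟨USp_unit h U hU₁ p, mul_eq_one_comm.mp (USp_unit h U hU₁ p)⟩, ?_⟩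
  rintro k ⟨j, q, l⟩
  have : (USp h U p).mulVec (fun x => if x = (0, (0, 0, k)) then 1 else 0) (0, (j, q, l)) =
      USp h U p (0, (j, q, l)) (0, (0, 0, k)) := by
    simp [Matrix.mulVec, dotProduct]
  rw [this, block h U hU₁, Rop_eq, diagonal_mul, mul_diagonal]
  by_cases hj : j = 0 ∧ q = 0
  · obtain ⟨rfl, rfl⟩ := hj
    rw [expect]
    by_cases hl : l = k
    · simp [hl, eVec]; ring
    · simp [hl, eVec]
  · have : (j, q, l) ≠ ((0, 0, k) : Ix h) := by
      intro e; simp only [Prod.mk.injEq] at e; exact hj ⟨e.1, e.2.1⟩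
    simp [hj, eVec, this]

end DiagBlockEncoding
end

section
/- Let q ≥ 1 and let P be a real polynomial with deg P ≤ q, parity q mod 2 (i.e. P(−x) = (−1)^q P(x) for all x), and |P(x)| ≤ 1 for all x ∈ [−1, 1]. Then there exist real phases φ₀, φ₁, …, φ_q such that for every x ∈ [−1, 1]: P(x) = Re( (e^{iφ₀Z} · ∏_{j=1}^{q} (W(x) · e^{iφ_jZ}))₍₀,₀₎ ), where the subscript (0,0) denotes the top-left entry of the 2×2 matrix product. -/
namespace QSP

/-- The signal matrix `W(x) = [[x, i√(1−x²)], [i√(1−x²), x]]`. -/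
noncomputable def Wmat (x : ℝ) : Matrix (Fin 2) (Fin 2) ℂ :=
  !![(x : ℂ), Complex.I * Real.sqrt (1 - x ^ 2);
     Complex.I * Real.sqrt (1 - x ^ 2), (x : ℂ)]

/-- The phase matrix `e^{iφZ} = diag(e^{iφ}, e^{−iφ})`. -/
noncomputable def ePhiZ (φ : ℝ) : Matrix (Fin 2) (Fin 2) ℂ :=
  !![Complex.exp (Complex.I * φ), 0; 0, Complex.exp (-(Complex.I * φ))]

/-- The quantum signal processing product
`e^{iφ₀Z} · ∏_{j=1}^{q} (W(x) · e^{iφ_jZ})` (ordered left to right by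
increasing `j`). -/
noncomputable def qspProd (q : ℕ) (φ : ℕ → ℝ) (x : ℝ) :
    Matrix (Fin 2) (Fin 2) ℂ :=
  ePhiZ (φ 0) * ((List.range q).map fun j => Wmat x * ePhiZ (φ (j + 1))).prod


open Polynomial

/-- degree at most `n` and parity `n` -/
def Good {R : Type*} [CommRing R] (n : ℕ) (p : R[X]) : Prop :=
  ∀ k, p.coeff k ≠ 0 → k ≤ n ∧ k % 2 = n % 2

section
variable {R : Type*} [CommRing R] {n m : ℕ} {p r : R[X]}

lemma Good.add (hp : Good n p) (hr : Good n r) : Good n (p + r) := by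
  intro k hk
  by_cases h : p.coeff k = 0
  · apply hr; intro h'; simp [h, h'] at hk
  · exact hp k h

lemma Good.neg (hp : Good n p) : Good n (-p) := by
  intro k hk
  exact hp k (by simpa using hk)

lemma Good.sub (hp : Good n p) (hr : Good n r) : Good n (p - r) := by
  rw [sub_eq_add_neg]; exact hp.add hr.neg

lemma Good.mul (hp : Good n p) (hr : Good m r) : Good (n + m) (p * r) := by
  intro k hk
  rw [coeff_mul] at hk
  obtain ⟨⟨i, j⟩, hij, h⟩ := Finset.exists_ne_zero_of_sum_ne_zero hk
  replace hij : i + j = k := by simpa using hij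
  have h1 := hp i (left_ne_zero_of_mul h)
  have h2 := hr j (right_ne_zero_of_mul h)
  omega

lemma good_C (a : R) : Good 0 (C a) := by
  intro k hk
  rw [coeff_C] at hk
  split_ifs at hk with h
  · simp [h]
  · simp at hk

lemma good_one : Good 0 (1 : R[X]) := good_C 1

lemma good_X : Good 1 (X : R[X]) := by
  intro k hk
  rw [coeff_X] at hk
  split_ifs at hk with h
  · simp [← h]
  · simp at hk

lemma good_zero : Good n (0 : R[X]) := by
  intro k hk; simp at hk

lemma Good.mono (hp : Good n p) (h : n ≤ m) (h2 : n % 2 = m % 2) : Good m p := by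
  intro k hk
  have := hp k hk
  omega

lemma Good.C_mul (a : R) (hp : Good n p) : Good n (C a * p) := by
  simpa using (good_C a).mul hp

lemma Good.X_mul (hp : Good n p) : Good (n + 1) (X * p) := by
  have := good_X.mul hp
  rwa [add_comm] at this

lemma Good.of_X_mul (hp : Good (n + 1) (X * p)) : Good n p := by
  intro k hk
  have := hp (k + 1) (by rwa [coeff_X_mul])
  omega

lemma Good.of_XX_mul (hp : Good n (X * (X * p))) : Good n p := by
  intro k hk
  have := hp (k + 2) (by rwa [coeff_X_mul, coeff_X_mul])
  omega

lemma Good.lower (hp : Good (n + 2) p) (h : p.coeff (n + 2) = 0) : Good n p := by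
  intro k hk
  have := hp k hk
  have : k ≠ n + 2 := by rintro rfl; exact hk h
  omega

lemma Good.natDegree_le (hp : Good n p) : p.natDegree ≤ n := by
  rw [natDegree_le_iff_coeff_eq_zero]
  intro k hk
  by_contra h
  have := hp k h
  omega

lemma Good.map {S : Type*} [CommRing S] (f : R →+* S) (hp : Good n p) : Good n (p.map f) := by
  intro k hk
  apply hp
  intro h
  simp [h] at hk

end

lemma good_of_parity (q : ℕ) (P : ℝ[X]) (hdeg : P.natDegree ≤ q)
    (hpar : ∀ x : ℝ, P.eval (-x) = (-1 : ℝ) ^ q * P.eval x) : Good q P := by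
  have h : P.comp (C (-1) * X) = C ((-1) ^ q) * P := by
    apply Polynomial.funext
    intro x
    simp [hpar x]
  intro k hk
  have hk1 : k ≤ q := (le_natDegree_of_ne_zero hk).trans hdeg
  refine ⟨hk1, ?_⟩
  have h2 := congrArg (fun p => p.coeff k) h
  simp only [comp_C_mul_X_coeff, coeff_C_mul] at h2
  rw [mul_comm] at h2
  have h3 := mul_right_cancel₀ hk (h2)
  rcases Nat.even_or_odd k with a | a <;> rcases Nat.even_or_odd q with b | b
  · rw [Nat.even_iff.1 a, Nat.even_iff.1 b]
  · rw [a.neg_one_pow, b.neg_one_pow] at h3; norm_num at h3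
  · rw [a.neg_one_pow, b.neg_one_pow] at h3; norm_num at h3
  · rw [Nat.odd_iff.1 a, Nat.odd_iff.1 b]

/-- The class of values of the norm form. -/
def SS (n : ℕ) (U : ℝ[X]) : Prop :=
  ∃ c d : ℝ[X], Good n c ∧ Good n (X * d) ∧
    expand ℝ 2 U = c ^ 2 + (1 - X ^ 2) * d ^ 2

lemma SS.mul {n m : ℕ} {U V : ℝ[X]} (hU : SS n U) (hV : SS m V) : SS (n + m) (U * V) := by
  obtain ⟨c, d, hc, hd, h⟩ := hU
  obtain ⟨c', d', hc', hd', h'⟩ := hV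
  refine ⟨c * c' - (1 - X ^ 2) * (d * d'), c * d' + d * c', ?_, ?_, ?_⟩
  · have e : c * c' - (1 - X ^ 2) * (d * d') = c * c' + (X * d) * (X * d') - d * d' := by ring
    rw [e]
    have h1 := hd.mul hd'
    refine ((hc.mul hc').add h1).sub (Good.of_XX_mul ?_)
    convert h1 using 1
    ring
  · have e : X * (c * d' + d * c') = c * (X * d') + (X * d) * c' := by ring
    rw [e]
    exact (hc.mul hd').add (hd.mul hc')
  · rw [map_mul, h, h']; ring

lemma SS.one : SS 1 1 := by
  refine ⟨X, 1, good_X, by simpa using good_X, by simp⟩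

lemma SS.mono {n m : ℕ} {U : ℝ[X]} (h : n ≤ m) (hU : SS n U) : SS m U := by
  induction m, h using Nat.le_induction with
  | base => exact hU
  | succ k _ ih => simpa using ih.mul SS.one

lemma SS.const {a : ℝ} (ha : 0 ≤ a) : SS 0 (C a) := by
  refine ⟨C (√a), 0, good_C _, by simpa using good_zero, ?_⟩
  rw [← C_pow, Real.sq_sqrt ha]; simp

/-- `a y + b (1-y)` -/
lemma SS.linear {a b : ℝ} (ha : 0 ≤ a) (hb : 0 ≤ b) : SS 1 (C a * X + C b * (1 - X)) := by
  refine ⟨C (√a) * X, C (√b), good_X.C_mul _, ?_, ?_⟩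
  · rw [mul_comm]; exact good_X.C_mul _
  · have h1 : (C (√a) : ℝ[X]) ^ 2 = C a := by rw [← C_pow, Real.sq_sqrt ha]
    have h2 : (C (√b) : ℝ[X]) ^ 2 = C b := by rw [← C_pow, Real.sq_sqrt hb]
    simp only [map_add, map_mul, expand_C, expand_X, map_sub, map_one]
    linear_combination (-X ^ 2) * h1 - (1 - X ^ 2) * h2

/-- `(s (1-y) - t y)^2 + d y (1-y)` -/
lemma SS.quad {s t d : ℝ} (hd : 0 ≤ d) :
    SS 2 ((C s * (1 - X) - C t * X) ^ 2 + C d * X * (1 - X)) := by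
  have hX2 : Good 2 (X * X : ℝ[X]) := good_X.X_mul
  have h1 : Good 2 (1 : ℝ[X]) := good_one.mono (by norm_num) (by norm_num)
  refine ⟨C s * (1 - X * X) - C t * (X * X), C (√d) * X, ?_, ?_, ?_⟩
  · exact ((h1.sub hX2).C_mul s).sub (hX2.C_mul t)
  · have : X * (C (√d) * X) = C (√d) * (X * X) := by ring
    rw [this]; exact hX2.C_mul _
  · have h2 : (C (√d) : ℝ[X]) ^ 2 = C d := by rw [← C_pow, Real.sq_sqrt hd]
    simp only [map_add, map_mul, expand_C, expand_X, map_sub, map_one, map_pow]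
    linear_combination (-(1 - X ^ 2) * X ^ 2) * h2

lemma SS.posquad {b c : ℝ} (hpos : ∀ y : ℝ, 0 < y ^ 2 + b * y + c) :
    SS 2 (X ^ 2 + C b * X + C c) := by
  have hc : 0 < c := by simpa using hpos 0
  have hg : 0 < 1 + b + c := by simpa using hpos 1
  set s := √c with hs
  set t := √(1 + b + c) with ht
  have hs0 : 0 < s := Real.sqrt_pos.2 hc
  have ht0 : 0 < t := Real.sqrt_pos.2 hg
  have hs2 : s ^ 2 = c := Real.sq_sqrt hc.le
  have ht2 : t ^ 2 = 1 + b + c := Real.sq_sqrt hg.le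
  -- 2β = b + 2c
  have hd : 0 ≤ b + 2 * c + 2 * s * t := by
    have h := hpos (s / (s + t))
    have hst : 0 < s + t := by positivity
    have h2 : 0 < ((s / (s + t)) ^ 2 + b * (s / (s + t)) + c) * (s + t) ^ 2 := by positivity
    have h3 : ((s / (s + t)) ^ 2 + b * (s / (s + t)) + c) * (s + t) ^ 2
        = s * t * (b + 2 * c + 2 * s * t) := by
      have : ((s / (s + t)) ^ 2 + b * (s / (s + t)) + c) * (s + t) ^ 2
        = s ^ 2 + b * s * (s + t) + c * (s + t) ^ 2 := by field_simp
      rw [this]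
      linear_combination (-s ^ 2) * ht2 - t ^ 2 * hs2
    rw [h3] at h2
    exact (pos_of_mul_pos_right h2 (by positivity)).le
  convert SS.quad (s := s) (t := t) hd using 1
  have e1 : (C s : ℝ[X]) ^ 2 = C c := by rw [← C_pow, hs2]
  have e2 : (C t : ℝ[X]) ^ 2 = 1 + C b + C c := by rw [← C_pow, ht2]; simp
  simp only [C_add, C_mul]
  have e3 : (C (2 : ℝ)) = (2 : ℝ[X]) := rfl
  rw [e3]
  linear_combination (-(1 - X) ^ 2) * e1 - X ^ 2 * e2

lemma nonneg_of_nonneg_off (V : ℝ[X]) (a : ℝ)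
    (h : ∀ y ∈ Set.Icc (0 : ℝ) 1, y ≠ a → 0 ≤ V.eval y) :
    ∀ y ∈ Set.Icc (0 : ℝ) 1, 0 ≤ V.eval y := by
  intro y hy
  by_contra! hlt
  have hopen : IsOpen {z | V.eval z < 0} := isOpen_lt V.continuous continuous_const
  obtain ⟨ε, he, hb⟩ := Metric.isOpen_iff.1 hopen y hlt
  have key : ∀ z, |z - y| < ε → z ∈ Set.Icc (0 : ℝ) 1 → z = a := by
    intro z hz hz1
    by_contra hne
    have := h z hz1 hne
    have h2 : V.eval z < 0 := hb (by simpa [Real.dist_eq] using hz)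
    linarith
  have hya : y = a := key y (by simpa using he) hy
  set δ := min (ε / 2) (1 / 2) with hδ
  have hδ0 : 0 < δ := by positivity
  have hδ1 : δ ≤ ε / 2 := min_le_left _ _
  have hδ2 : δ ≤ 1 / 2 := min_le_right _ _
  rcases le_total y (1 / 2) with hh | hh
  · have := key (y + δ) (by rw [add_sub_cancel_left, abs_of_pos hδ0]; linarith)
      ⟨by linarith [hy.1], by linarith⟩
    linarith
  · have := key (y - δ) (by rw [sub_sub_cancel_left, abs_neg, abs_of_pos hδ0]; linarith)
      ⟨by linarith [hy.2], by linarith [hy.2]⟩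
    linarith

lemma SS.of_nonneg (n : ℕ) : ∀ U : ℝ[X], U.natDegree ≤ n →
    (∀ y ∈ Set.Icc (0 : ℝ) 1, 0 ≤ U.eval y) → SS n U := by
  induction n using Nat.strong_induction_on with
  | _ n ih =>
  intro U hdeg hU
  by_cases hconst : U.natDegree = 0
  · rw [natDegree_eq_zero] at hconst
    obtain ⟨a, rfl⟩ := hconst
    have : 0 ≤ a := by simpa using hU 0 (by simp)
    exact (SS.const this).mono (Nat.zero_le n)
  have hU0 : U ≠ 0 := by rintro rfl; simp at hconst
  by_cases hroot : ∃ a, U.IsRoot a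
  · obtain ⟨a, ha⟩ := hroot
    obtain ⟨V, rfl⟩ := dvd_iff_isRoot.2 ha
    have hV0 : V ≠ 0 := right_ne_zero_of_mul hU0
    have hdV : V.natDegree + 1 ≤ n := by
      rw [natDegree_mul (X_sub_C_ne_zero a) hV0, natDegree_X_sub_C] at hdeg
      omega
    obtain ⟨m, rfl⟩ : ∃ m, n = m + 1 := ⟨n - 1, by omega⟩
    simp only [eval_mul, eval_sub, eval_X, eval_C] at hU
    rcases le_or_gt a 0 with h0 | h0
    · have hVn := ih m (by omega) V (by omega) (nonneg_of_nonneg_off V a (by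
        intro y hy hne
        have : 0 < y - a := lt_of_le_of_ne (by linarith [hy.1]) (by
          intro h; apply hne; linarith)
        exact nonneg_of_mul_nonneg_right (hU y hy) this))
      have h2 := hVn.mul (SS.linear (a := 1 - a) (b := -a) (by linarith) (by linarith))
      convert h2 using 1
      simp only [C_sub, C_neg, C_1]; ring
    rcases le_or_gt 1 a with h1 | h1
    · have hVn := ih m (by omega) (-V) (by rw [natDegree_neg]; omega) (nonneg_of_nonneg_off _ a (by
        intro y hy hne
        have : 0 < a - y := lt_of_le_of_ne (by linarith [hy.2]) (by
          intro h; apply hne; linarith)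
        have h3 := hU y hy
        rw [eval_neg]
        refine nonneg_of_mul_nonneg_right (a := a - y) ?_ this
        linarith))
      have h2 := hVn.mul (SS.linear (a := a - 1) (b := a) (by linarith) (by linarith))
      convert h2 using 1
      simp only [C_sub, C_1]; ring
    · -- double root
      have hVr : ∀ y ∈ Set.Icc (0 : ℝ) 1, a < y → 0 ≤ V.eval y := by
        intro y hy hay
        exact nonneg_of_mul_nonneg_right (hU y hy) (by linarith)
      have hVl : ∀ y ∈ Set.Icc (0 : ℝ) 1, y < a → V.eval y ≤ 0 := by
        intro y hy hay
        have h3 := hU y hy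
        by_contra! hp
        have := mul_pos (sub_pos.2 hay) hp
        linarith
      have hVa : V.IsRoot a := by
        apply le_antisymm
        · have hc : Filter.Tendsto (fun y => V.eval y) (nhdsWithin a (Set.Iio a)) (nhds (V.eval a)) :=
            V.continuous.continuousAt.mono_left nhdsWithin_le_nhds
          refine le_of_tendsto hc ?_
          filter_upwards [Ioo_mem_nhdsLT h0] with y hy
          exact hVl y ⟨hy.1.le, by linarith [hy.2]⟩ hy.2
        · have hc : Filter.Tendsto (fun y => V.eval y) (nhdsWithin a (Set.Ioi a)) (nhds (V.eval a)) :=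
            V.continuous.continuousAt.mono_left nhdsWithin_le_nhds
          refine ge_of_tendsto hc ?_
          filter_upwards [Ioo_mem_nhdsGT h1] with y hy
          exact hVr y ⟨by linarith [hy.1], hy.2.le⟩ hy.1
      obtain ⟨T, rfl⟩ := dvd_iff_isRoot.2 hVa
      have hT0 : T ≠ 0 := right_ne_zero_of_mul hV0
      rw [natDegree_mul (X_sub_C_ne_zero a) hT0, natDegree_X_sub_C] at hdV
      obtain ⟨k, rfl⟩ : ∃ k, m = k + 1 := ⟨m - 1, by omega⟩
      have hTn := ih k (by omega) T (by omega) (nonneg_of_nonneg_off T a (by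
        intro y hy hne
        have h3 := hU y hy
        simp only [eval_mul, eval_sub, eval_X, eval_C] at h3
        have : 0 < (y - a) ^ 2 := by
          have := sub_ne_zero.2 hne
          positivity
        refine nonneg_of_mul_nonneg_right (b := T.eval y) (a := (y - a) ^ 2) ?_ this
        linarith))
      have h2 := hTn.mul (SS.quad (s := a) (t := 1 - a) (d := 0) le_rfl)
      convert h2 using 1
      simp only [C_sub, C_1, C_0]; ring
  · push Not at hroot
    obtain ⟨z, hz⟩ := IsAlgClosed.exists_aeval_eq_zero ℂ U (by
      intro h; exact hconst (natDegree_eq_of_degree_eq_some h))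
    have him : z.im ≠ 0 := by
      intro him
      apply hroot z.re
      have : z = (algebraMap ℝ ℂ z.re) := by
        apply Complex.ext <;> simp [him]
      rw [this, aeval_algebraMap_apply] at hz
      simpa using hz
    obtain ⟨V, hV⟩ := quadratic_dvd_of_aeval_eq_zero_im_ne_zero U hz him
    have hpos : ∀ y : ℝ, 0 < y ^ 2 + (-(2 * z.re)) * y + ‖z‖ ^ 2 := by
      intro y
      rw [← Complex.normSq_eq_norm_sq, Complex.normSq_apply]
      have : 0 < z.im ^ 2 := by positivity
      nlinarith [sq_nonneg (y - z.re)]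
    have hQ : (X ^ 2 - C (2 * z.re) * X + C (‖z‖ ^ 2) : ℝ[X])
        = X ^ 2 + C (-(2 * z.re)) * X + C (‖z‖ ^ 2) := by
      simp only [C_neg]; ring
    rw [hQ] at hV
    set Q : ℝ[X] := X ^ 2 + C (-(2 * z.re)) * X + C (‖z‖ ^ 2) with hQdef
    have hQd : Q.natDegree = 2 := by rw [hQdef]; compute_degree!
    subst hV
    have hQ0 : Q ≠ 0 := left_ne_zero_of_mul hU0
    have hV0 : V ≠ 0 := right_ne_zero_of_mul hU0
    rw [natDegree_mul hQ0 hV0, hQd] at hdeg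
    obtain ⟨k, rfl⟩ : ∃ k, n = k + 2 := ⟨n - 2, by omega⟩
    have hVn := ih k (by omega) V (by omega) (by
      intro y hy
      have h3 := hU y hy
      rw [eval_mul] at h3
      refine nonneg_of_mul_nonneg_right h3 ?_
      have := hpos y
      simpa [hQdef] using this)
    rw [mul_comm]
    exact hVn.mul (SS.posquad hpos)

lemma exists_complement (q : ℕ) (P : ℝ[X]) (hP : Good q P)
    (hbound : ∀ x ∈ Set.Icc (-1 : ℝ) 1, |P.eval x| ≤ 1) :
    ∃ c d : ℝ[X], Good q c ∧ Good q (X * d) ∧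
      1 - P ^ 2 = c ^ 2 + (1 - X ^ 2) * d ^ 2 := by
  have hR : Good (2 * q) (1 - P ^ 2) := by
    have h1 : Good (2 * q) (1 : ℝ[X]) := good_one.mono (by omega) (by omega)
    have h2 := hP.mul hP
    rw [← two_mul, ← pow_two] at h2
    exact h1.sub h2
  have hexp : expand ℝ 2 (contract 2 (1 - P ^ 2)) = 1 - P ^ 2 := by
    ext k
    rw [coeff_expand (by norm_num), coeff_contract (by norm_num)]
    split_ifs with h
    · rw [Nat.div_mul_cancel h]
    · by_contra hne
      have := hR k (fun h => hne h.symm)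
      omega
  have := SS.of_nonneg q (contract 2 (1 - P ^ 2)) (by
      rw [natDegree_le_iff_coeff_eq_zero]
      intro k hk
      rw [coeff_contract (by norm_num)]
      by_contra hne
      have := hR _ hne
      omega) (by
      intro y hy
      have h1 : (contract 2 (1 - P ^ 2)).eval y = (1 - P ^ 2).eval (√y) := by
        rw [← hexp, expand_eval, Real.sq_sqrt hy.1, hexp]
      rw [h1]
      have := hbound (√y) ⟨by linarith [Real.sqrt_nonneg y], Real.sqrt_le_one.2 hy.2⟩
      have h2 := (sq_le_one_iff_abs_le_one _).2 this
      simp only [eval_sub, eval_one, eval_pow]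
      linarith)
  obtain ⟨c, d, hc, hd, h⟩ := this
  exact ⟨c, d, hc, hd, by rw [← h, hexp]⟩

lemma qspProd_succ (q : ℕ) (φ : ℕ → ℝ) (x : ℝ) :
    qspProd (q + 1) φ x = qspProd q φ x * (Wmat x * ePhiZ (φ (q + 1))) := by
  simp [qspProd, List.range_succ, mul_assoc]

lemma qspProd_congr (q : ℕ) (φ ψ : ℕ → ℝ) (h : ∀ j ≤ q, φ j = ψ j) (x : ℝ) :
    qspProd q φ x = qspProd q ψ x := by
  induction q with
  | zero => simp [qspProd, h 0]
  | succ q ih => rw [qspProd_succ, qspProd_succ, ih (fun j hj => h j (by omega)), h (q + 1) le_rfl]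

lemma exists_phase (a b : ℂ) (h : a * starRingEnd ℂ a = b * starRingEnd ℂ b) :
    ∃ φ : ℝ, Complex.exp (-(Complex.I * φ)) * a = Complex.exp (Complex.I * φ) * b := by
  have hn : ‖a‖ = ‖b‖ := by
    rw [Complex.mul_conj, Complex.mul_conj, Complex.normSq_eq_norm_sq, Complex.normSq_eq_norm_sq] at h
    have : ‖a‖ ^ 2 = ‖b‖ ^ 2 := by exact_mod_cast h
    exact (sq_eq_sq₀ (norm_nonneg _) (norm_nonneg _)).1 this
  refine ⟨(a.arg - b.arg) / 2, ?_⟩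
  have ha := Complex.norm_mul_exp_arg_mul_I a
  have hb := Complex.norm_mul_exp_arg_mul_I b
  rw [hn] at ha
  generalize a.arg = α at *
  generalize b.arg = β at *
  rw [← ha]
  conv_rhs => rw [← hb]
  rw [mul_left_comm, mul_left_comm _ (‖b‖ : ℂ), ← Complex.exp_add, ← Complex.exp_add]
  congr 2
  push_cast
  ring

lemma qsp_peel (q : ℕ) : ∀ A B : ℂ[X], Good q A → Good q (X * B) →
    A * A.map (starRingEnd ℂ) + (1 - X ^ 2) * (B * B.map (starRingEnd ℂ)) = 1 →
    ∃ φ : ℕ → ℝ, ∀ x ∈ Set.Icc (-1 : ℝ) 1,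
      qspProd q φ x 0 0 = A.eval (x : ℂ) ∧
      qspProd q φ x 0 1 = Complex.I * (Real.sqrt (1 - x ^ 2)) * B.eval (x : ℂ) := by
  induction q with
  | zero =>
    intro A B hA hB h
    have hB0 : B = 0 := by
      ext k
      by_contra hne
      have := hB (k + 1) (by rwa [coeff_X_mul])
      omega
    obtain ⟨a, rfl⟩ : ∃ a, C a = A := natDegree_eq_zero.1 (Nat.le_zero.1 hA.natDegree_le)
    subst hB0
    simp only [map_C, zero_mul, mul_zero, add_zero, ← C_mul] at h
    have h1 : a * starRingEnd ℂ a = 1 := by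
      have := congrArg (fun p => p.coeff 0) h
      simpa using this
    have hn : ‖a‖ = 1 := by
      rw [Complex.mul_conj, Complex.normSq_eq_norm_sq] at h1
      have : ‖a‖ ^ 2 = 1 := by exact_mod_cast h1
      nlinarith [norm_nonneg a]
    refine ⟨fun _ => a.arg, fun x _ => ?_⟩
    have h2 := Complex.norm_mul_exp_arg_mul_I a
    rw [hn, mul_comm _ Complex.I] at h2
    simp only [Complex.ofReal_one, one_mul] at h2
    simp [qspProd, ePhiZ, h2]
  | succ q ih =>
    intro A B hA hB h
    set A' := A.map (starRingEnd ℂ) with hA'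
    set B' := B.map (starRingEnd ℂ) with hB'
    have gB : Good q B := hB.of_X_mul
    have gA' : Good (q + 1) A' := hA.map _
    have gB' : Good q B' := gB.map _
    have hcoef : A.coeff (q + 1) * starRingEnd ℂ (A.coeff (q + 1))
        = B.coeff q * starRingEnd ℂ (B.coeff q) := by
      have e : A * A' + B * B' = 1 + (X * B) * (X * B') := by linear_combination h
      have e2 := congrArg (fun p => p.coeff ((q + 1) + (q + 1))) e
      simp only [coeff_add] at e2
      rw [coeff_mul_add_eq_of_natDegree_le hA.natDegree_le gA'.natDegree_le,
        coeff_mul_add_eq_of_natDegree_le hB.natDegree_le gB'.X_mul.natDegree_le,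
        coeff_X_mul, coeff_X_mul, coeff_one, if_neg (by omega),
        coeff_eq_zero_of_natDegree_lt (p := B * B')
          (lt_of_le_of_lt (gB.mul gB').natDegree_le (by omega)), hA', hB', coeff_map, coeff_map] at e2
      simpa using e2
    obtain ⟨θ, hθ⟩ := exists_phase _ _ hcoef
    set u := Complex.exp (Complex.I * θ) with hu
    set v := Complex.exp (-(Complex.I * θ)) with hv
    have huv : u * v = 1 := by rw [hu, hv, ← Complex.exp_add]; simp
    have hcu : starRingEnd ℂ u = v := by
      rw [hu, hv, ← Complex.exp_conj]; simp
    have hcv : starRingEnd ℂ v = u := by rw [← hcu]; simp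
    have hUV : (C u : ℂ[X]) * C v = 1 := by rw [← C_mul, huv, C_1]
    have gXA : Good (q + 2) (X * A) := hA.X_mul
    have gXXB : Good (q + 2) (X * (X * B)) := hB.X_mul
    have gB2 : Good (q + 2) B := gB.mono (by omega) (by omega)
    obtain ⟨φ, hφ⟩ := ih (C v * (X * A) + (C u * B - C u * (X * (X * B)))) (C u * (X * B) - C v * A)
      (by
        apply Good.lower
        · exact (gXA.C_mul _).add ((gB2.C_mul _).sub (gXXB.C_mul _))
        · have : B.coeff (q + 2) = 0 :=
            coeff_eq_zero_of_natDegree_lt (lt_of_le_of_lt gB.natDegree_le (by omega))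
          simp only [coeff_add, coeff_sub, coeff_C_mul, coeff_X_mul, this]
          linear_combination hθ)
      (by
        apply Good.lower
        · have e : X * (C u * (X * B) - C v * A) = C u * (X * (X * B)) - C v * (X * A) := by ring
          rw [e]
          exact (gXXB.C_mul _).sub (gXA.C_mul _)
        · simp only [coeff_sub, coeff_C_mul, coeff_X_mul]
          linear_combination -hθ)
      (by
        simp only [Polynomial.map_add, Polynomial.map_sub, Polynomial.map_mul, map_C, map_X, hcu, hcv,
          ← hA', ← hB']
        linear_combination h + (A * A' + (1 - X ^ 2) * (B * B')) * hUV)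
    refine ⟨Function.update φ (q + 1) θ, fun x hx => ?_⟩
    obtain ⟨h0, h1⟩ := hφ x hx
    have hs : ((Real.sqrt (1 - x ^ 2) : ℝ) : ℂ) ^ 2 = 1 - (x : ℂ) ^ 2 := by
      rw [← Complex.ofReal_pow, Real.sq_sqrt (by nlinarith [hx.1, hx.2])]; push_cast; ring
    rw [qspProd_succ, qspProd_congr q _ φ (fun j hj => Function.update_of_ne (by omega) _ _)]
    rw [Function.update_self]
    simp only [Matrix.mul_apply, Fin.sum_univ_two, h0, h1, Wmat, ePhiZ, Matrix.of_apply,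
      Matrix.cons_val', Matrix.cons_val_zero, Matrix.cons_val_one, Matrix.cons_val_fin_one,
      ← hu, ← hv, eval_add, eval_sub, eval_mul, eval_C, eval_X]
    set s : ℂ := ((Real.sqrt (1 - x ^ 2) : ℝ) : ℂ)
    have hI : Complex.I ^ 2 = -1 := Complex.I_sq
    constructor
    · linear_combination A.eval (x : ℂ) * huv
        + (s ^ 2 * u * (u * (x * B.eval (x : ℂ)) - v * A.eval (x : ℂ))) * hI
        - (u * (u * (x * B.eval (x : ℂ)) - v * A.eval (x : ℂ))) * hs
    · linear_combination (Complex.I * s * B.eval (x : ℂ)) * huv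

/-- real quantum signal processing. Every real polynomial of
degree at most `q`, with parity `q mod 2` and bounded by `1` on `[−1,1]`, is
the real part of the top-left entry of a QSP product for suitable phases. -/
theorem exists_qsp_phases (q : ℕ) (hq : 1 ≤ q) (P : Polynomial ℝ)
    (hdeg : P.natDegree ≤ q)
    (hpar : ∀ x : ℝ, P.eval (-x) = (-1 : ℝ) ^ q * P.eval x)
    (hbound : ∀ x ∈ Set.Icc (-1 : ℝ) 1, |P.eval x| ≤ 1) :
    ∃ φ : ℕ → ℝ, ∀ x ∈ Set.Icc (-1 : ℝ) 1,
      P.eval x = (qspProd q φ x 0 0).re := by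
  have hP := good_of_parity q P hdeg hpar
  obtain ⟨c, d, hc, hd, h⟩ := exists_complement q P hP hbound
  have hconj : (starRingEnd ℂ).comp (algebraMap ℝ ℂ) = algebraMap ℝ ℂ := by
    ext x; simp
  have hI : (Polynomial.C Complex.I : ℂ[X]) ^ 2 = -1 := by
    rw [← Polynomial.C_pow, Complex.I_sq]; simp
  have h' := congrArg (Polynomial.map (algebraMap ℝ ℂ)) h
  simp only [Polynomial.map_add, Polynomial.map_sub, Polynomial.map_mul, Polynomial.map_pow,
    Polynomial.map_one, map_X] at h'
  obtain ⟨φ, hφ⟩ := qsp_peel q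
    (P.map (algebraMap ℝ ℂ) + Polynomial.C Complex.I * c.map (algebraMap ℝ ℂ))
    (d.map (algebraMap ℝ ℂ))
    ((hP.map _).add ((hc.map _).C_mul _))
    (by simpa using hd.map (algebraMap ℝ ℂ))
    (by
      simp only [Polynomial.map_add, Polynomial.map_mul, Polynomial.map_map, hconj, map_C,
        Complex.conj_I, C_neg]
      linear_combination -h' - (c.map (algebraMap ℝ ℂ)) ^ 2 * hI)
  refine ⟨φ, fun x hx => ?_⟩
  rw [(hφ x hx).1]
  have e : ∀ p : ℝ[X], (p.map (algebraMap ℝ ℂ)).eval (x : ℂ) = ((p.eval x : ℝ) : ℂ) := by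
    intro p
    have := Polynomial.eval_map_algebraMap p (x : ℂ)
    rw [this]
    exact Polynomial.aeval_algebraMap_apply ℂ x p
  simp [e]

end QSP
end

section
/- Let m ≥ 1, N ≥ 1, and let U be a unitary on ℂ^{2^m} ⊗ ℂ^N such that the compression A := (⟨0|^{⊗m} ⊗ I_N)·U·(|0⟩^{⊗m} ⊗ I_N) is Hermitian. Let q ≥ 1 and let P be a real polynomial with deg P ≤ q, parity q mod 2 (P(−x) = (−1)^q P(x)), and |P(x)| ≤ 1 for all x ∈ [−1, 1]. Set Π = |0⟩⟨0|^{⊗m} ⊗ I_N, and for φ ∈ ℝ let e^{iφ(2Π−I)} = e^{iφ}·Π + e^{−iφ}·(I − Π). For Φ = (φ₁, …, φ_q) ∈ ℝ^q define the alternating phase modulation sequence U_Φ = e^{iφ₁(2Π−I)}·U·∏_{j=1}^{(q−1)/2}( e^{iφ_{2j}(2Π−I)}·U†·e^{iφ_{2j+1}(2Π−I)}·U ) when q is odd, and U_Φ = ∏_{j=1}^{q/2}( e^{iφ_{2j−1}(2Π−I)}·U†·e^{iφ_{2j}(2Π−I)}·U ) when q is even. Then there exists Φ ∈ ℝ^q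 such that (⟨0|^{⊗m} ⊗ I_N)·(1/2)(U_Φ + U_{−Φ})·(|0⟩^{⊗m} ⊗ I_N) = P(A), where P(A) is the evaluation of the polynomial P at the matrix A, and U_{−Φ} denotes the same sequence with all phases negated. -/
namespace QSVT

open Matrix

/-- The projector `Π = |0⟩⟨0|^{⊗m} ⊗ I_N` on `ℂ^{2^m} ⊗ ℂ^N`. -/
def Proj0 (m N : ℕ) : Matrix (Fin (2 ^ m) × Fin N) (Fin (2 ^ m) × Fin N) ℂ :=
  Matrix.of fun x y => if x.1 = 0 ∧ y.1 = 0 ∧ x.2 = y.2 then 1 else 0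

/-- The phase operator `e^{iφ(2Π−I)} = e^{iφ}·Π + e^{−iφ}·(I − Π)`. -/
noncomputable def phaseOp (m N : ℕ) (φ : ℝ) :
    Matrix (Fin (2 ^ m) × Fin N) (Fin (2 ^ m) × Fin N) ℂ :=
  Complex.exp (Complex.I * φ) • Proj0 m N +
    Complex.exp (-(Complex.I * φ)) • (1 - Proj0 m N)

/-- The alternating phase modulation sequence `U_Φ`: for odd `q`,
`e^{iφ₁(2Π−I)}·U·∏_{j=1}^{(q−1)/2}(e^{iφ_{2j}(2Π−I)}·U†·e^{iφ_{2j+1}(2Π−I)}·U)`;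
for even `q`, `∏_{j=1}^{q/2}(e^{iφ_{2j−1}(2Π−I)}·U†·e^{iφ_{2j}(2Π−I)}·U)`
(products ordered left to right by increasing `j`). -/
noncomputable def altPhaseSeq (m N : ℕ)
    (U : Matrix (Fin (2 ^ m) × Fin N) (Fin (2 ^ m) × Fin N) ℂ)
    (q : ℕ) (Φ : ℕ → ℝ) :
    Matrix (Fin (2 ^ m) × Fin N) (Fin (2 ^ m) × Fin N) ℂ :=
  if q % 2 = 1 then
    phaseOp m N (Φ 1) * U *
      ((List.range ((q - 1) / 2)).map fun j =>
        phaseOp m N (Φ (2 * j + 2)) * Uᴴ * phaseOp m N (Φ (2 * j + 3)) * U).prod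
  else
    ((List.range (q / 2)).map fun j =>
      phaseOp m N (Φ (2 * j + 1)) * Uᴴ * phaseOp m N (Φ (2 * j + 2)) * U).prod

section Helpers
open Polynomial

def S (q : ℕ) (F : ℝ[X]) : Prop := ∃ B C : ℝ[X], B.natDegree ≤ q ∧ (X * C).natDegree ≤ q ∧
  B.comp (-X) = (-1) ^ q * B ∧ C.comp (-X) = -((-1) ^ q * C) ∧ F = B ^ 2 + (1 - X ^ 2) * C ^ 2

theorem natDegree_of_X_mul {C : ℝ[X]} {q : ℕ} (h : (X * C).natDegree ≤ q) : C.natDegree ≤ q := by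
  by_cases hC : C = 0
  · simp [hC]
  · rw [natDegree_X_mul hC] at h; omega

theorem S_mul {a b : ℕ} {F G : ℝ[X]} (hF : S a F) (hG : S b G) : S (a + b) (F * G) := by
  obtain ⟨B, C, h1, h2, h3, h4, rfl⟩ := hF
  obtain ⟨B', C', h1', h2', h3', h4', rfl⟩ := hG
  refine ⟨B * B' - (1 - X ^ 2) * (C * C'), B * C' + B' * C, ?_, ?_, ?_, ?_, ?_⟩
  · have : B * B' - (1 - X ^ 2) * (C * C') = B * B' - C * C' + (X * C) * (X * C') := by ring
    rw [this]
    refine (natDegree_add_le _ _).trans (max_le ((natDegree_sub_le _ _).trans (max_le ?_ ?_)) ?_)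
    · exact natDegree_mul_le.trans (by omega)
    · have := natDegree_of_X_mul h2
      have := natDegree_of_X_mul h2'
      exact natDegree_mul_le.trans (by omega)
    · exact natDegree_mul_le.trans (by omega)
  · have : X * (B * C' + B' * C) = B * (X * C') + B' * (X * C) := by ring
    rw [this]
    refine (natDegree_add_le _ _).trans (max_le ?_ ?_)
    · exact natDegree_mul_le.trans (by omega)
    · exact natDegree_mul_le.trans (by omega)
  · simp only [sub_comp, mul_comp, h3, h3', h4, h4', pow_comp, X_comp, one_comp]; ring
  · simp only [add_comp, mul_comp, h3, h3', h4, h4']; ring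
  · ring

theorem S_zero (q : ℕ) : S q 0 := ⟨0, 0, by simp, by simp, by simp, by simp, by simp⟩

theorem S_one (q : ℕ) : S q 1 := by
  induction q with
  | zero => exact ⟨1, 0, by simp, by simp, by simp, by simp, by simp⟩
  | succ n ih =>
    have : S 1 1 := ⟨X, 1, by simp, by simp, by simp, by simp, by ring⟩
    simpa using S_mul ih this

theorem S_const (q : ℕ) (c : ℝ) (hc : 0 ≤ c) : S q (C c) := by
  have : S 0 (C c) := ⟨C √c, 0, by simp, by simp, by simp, by simp, by
    rw [← C_pow, Real.sq_sqrt hc]; simp⟩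
  simpa using S_mul this (S_one q)

theorem S_lin (α β : ℝ) (h0 : 0 ≤ β) (h1 : 0 ≤ α + β) : S 1 (C α * X ^ 2 + C β) := by
  refine ⟨C √(α + β) * X, C √β, by compute_degree, by compute_degree, by simp, by simp, ?_⟩
  rw [mul_pow, ← C_pow, ← C_pow, Real.sq_sqrt h0, Real.sq_sqrt h1, C_add]; ring

-- (y-u)^2+v^2 = y^2 - 2 u y + w
theorem S_quad (u v : ℝ) : S 2 ((X ^ 2 - C u) ^ 2 + C v ^ 2) := by
  set s := √(u ^ 2 + v ^ 2) with hs
  set t := √((1 - u) ^ 2 + v ^ 2) with ht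
  have hs2 : s ^ 2 = u ^ 2 + v ^ 2 := Real.sq_sqrt (by positivity)
  have ht2 : t ^ 2 = (1 - u) ^ 2 + v ^ 2 := Real.sq_sqrt (by positivity)
  have hs0 : |u| ≤ s := Real.abs_le_sqrt (by nlinarith [sq_nonneg v])
  have ht0 : |1 - u| ≤ t := Real.abs_le_sqrt (by nlinarith [sq_nonneg v])
  have hl : 0 ≤ (s + t) ^ 2 - 1 := by
    have : 1 ≤ s + t := by linarith [le_abs_self u, le_abs_self (1 - u)]
    nlinarith
  set l := √((s + t) ^ 2 - 1) with hl'
  have hl2 : l ^ 2 = (s + t) ^ 2 - 1 := Real.sq_sqrt hl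
  refine ⟨C s - C (s + t) * X ^ 2, C l * X, by compute_degree, by rw [mul_left_comm, ← sq]; compute_degree, by simp, by simp, ?_⟩
  have e1 : (C l) ^ 2 = (C s + C t) ^ 2 - (1 : ℝ[X]) := by
    rw [← C_pow, hl2]; simp
  have e2 : (C s) ^ 2 = C u ^ 2 + (C v ^ 2 : ℝ[X]) := by
    rw [← C_pow, hs2]; simp
  have e3 : (C t) ^ 2 = (1 - C u) ^ 2 + (C v ^ 2 : ℝ[X]) := by
    rw [← C_pow, ht2]; simp
  rw [C_add]
  linear_combination (-(1 - X ^ 2) * X ^ 2) * e1 + (X ^ 2 - 1) * e2 + (-X ^ 2) * e3 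

theorem nonneg_of_punctured (H : ℝ[X]) (z : ℝ)
    (h : ∀ y ∈ Set.Icc (0 : ℝ) 1, y ≠ z → 0 ≤ H.eval y) :
    ∀ y ∈ Set.Icc (0 : ℝ) 1, 0 ≤ H.eval y := by
  have hd : Dense ({z}ᶜ : Set ℝ) := dense_compl_singleton z
  have h1 : Set.Icc (0 : ℝ) 1 ⊆ closure (Set.Ioo 0 1 ∩ {z}ᶜ) := by
    rw [← closure_Ioo (by norm_num : (0 : ℝ) ≠ 1)]
    exact closure_minimal (hd.open_subset_closure_inter isOpen_Ioo) isClosed_closure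
  have h2 : closure (Set.Ioo 0 1 ∩ {z}ᶜ) ⊆ {y : ℝ | 0 ≤ H.eval y} :=
    closure_minimal (fun y hy => h y (Set.Ioo_subset_Icc_self hy.1) hy.2)
      (isClosed_le continuous_const H.continuous)
  exact fun y hy => h2 (h1 hy)

theorem S_main (n : ℕ) : ∀ G : ℝ[X], G.natDegree ≤ n → (∀ y ∈ Set.Icc (0 : ℝ) 1, 0 ≤ G.eval y) →
    S n (G.comp (X ^ 2)) := by
  induction n using Nat.strong_induction_on with
  | _ n ih =>
  intro G hdeg hG
  by_cases h0 : G.natDegree = 0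
  · obtain ⟨c, rfl⟩ := natDegree_eq_zero.mp h0
    have := hG 0 (by simp)
    rw [C_comp]
    exact S_const n c (by simpa using this)
  obtain ⟨z, hz⟩ := Complex.exists_root (f := G.map (algebraMap ℝ ℂ)) (by
    rw [degree_map]; exact natDegree_pos_iff_degree_pos.mp (Nat.pos_of_ne_zero h0))
  have hz' : aeval z G = 0 := by rwa [IsRoot, eval_map_algebraMap] at hz
  have hG0 : G ≠ 0 := by rintro rfl; simp at h0
  by_cases him : z.im = 0
  · obtain ⟨x, rfl⟩ : ∃ x : ℝ, (x : ℂ) = z := ⟨z.re, by apply Complex.ext <;> simp [him]⟩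
    have hr : G.eval x = 0 := by
      have : aeval ((algebraMap ℝ ℂ) x) G = 0 := hz'
      rw [aeval_algebraMap_apply] at this
      simpa using this
    obtain ⟨H, hH⟩ := dvd_iff_isRoot.mpr hr
    have hH0 : H ≠ 0 := by rintro rfl; simp at hH; exact hG0 hH
    have hHd : H.natDegree + 1 = G.natDegree := by
      rw [hH, natDegree_mul (X_sub_C_ne_zero x) hH0, natDegree_X_sub_C]; ring
    have hev : ∀ y, G.eval y = (y - x) * H.eval y := fun y => by rw [hH]; simp
    rcases le_or_gt x 0 with hx | hx
    · have := ih (n - 1) (by omega) H (by omega) (nonneg_of_punctured H x fun y hy hyx => by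
        have h1 := hG y hy
        rw [hev] at h1
        exact nonneg_of_mul_nonneg_right h1 (sub_pos.mpr (lt_of_le_of_ne (hx.trans hy.1) (Ne.symm hyx))))
      have h2 := S_mul (S_lin 1 (-x) (by linarith) (by linarith)) this
      rw [show 1 + (n - 1) = n by omega] at h2
      convert h2 using 1
      rw [hH]; simp [sub_eq_add_neg]
    rcases le_or_gt 1 x with hx1 | hx1
    · have := ih (n - 1) (by omega) (-H) (by rw [natDegree_neg]; omega) (nonneg_of_punctured (-H) x fun y hy hyx => by
        have h1 := hG y hy
        rw [hev] at h1
        have h2 : 0 < x - y := sub_pos.mpr (lt_of_le_of_ne (hy.2.trans hx1) hyx)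
        have : 0 ≤ (x - y) * eval y (-H) := by rw [eval_neg]; linarith
        exact nonneg_of_mul_nonneg_right this h2)
      have h2 := S_mul (S_lin (-1) x (by linarith) (by linarith)) this
      rw [show 1 + (n - 1) = n by omega] at h2
      convert h2 using 1
      rw [hH]; simp; ring
    · have hHx : H.eval x = 0 := by
        have a1 : 0 ≤ H.eval x := by
          have hc : Filter.Tendsto (fun y => H.eval y) (nhdsWithin x (Set.Ioi x)) (nhds (H.eval x)) :=
            H.continuous.continuousAt.mono_left nhdsWithin_le_nhds
          refine ge_of_tendsto hc ?_
          filter_upwards [Ioo_mem_nhdsGT hx1] with y hy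
          have h1 := hG y ⟨by linarith [hy.1], hy.2.le⟩
          rw [hev] at h1
          exact nonneg_of_mul_nonneg_right h1 (sub_pos.mpr hy.1)
        have a2 : H.eval x ≤ 0 := by
          have hc : Filter.Tendsto (fun y => H.eval y) (nhdsWithin x (Set.Iio x)) (nhds (H.eval x)) :=
            H.continuous.continuousAt.mono_left nhdsWithin_le_nhds
          refine le_of_tendsto hc ?_
          filter_upwards [Ioo_mem_nhdsLT hx] with y hy
          have h1 := hG y ⟨hy.1.le, by linarith [hy.2]⟩
          rw [hev] at h1
          have h3 := hy.2
          by_contra hcon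
          push Not at hcon
          nlinarith
        exact le_antisymm a2 a1
      obtain ⟨K, hK⟩ := dvd_iff_isRoot.mpr hHx
      have hK0 : K ≠ 0 := by rintro rfl; simp at hK; exact hH0 hK
      have hKd : K.natDegree + 1 = H.natDegree := by
        rw [hK, natDegree_mul (X_sub_C_ne_zero x) hK0, natDegree_X_sub_C]; ring
      have := ih (n - 2) (by omega) K (by omega) (nonneg_of_punctured K x fun y hy hyx => by
        have h1 := hG y hy
        rw [hev, hK] at h1
        have h2 : 0 < (y - x) ^ 2 := by have := sub_ne_zero.mpr hyx; positivity
        refine nonneg_of_mul_nonneg_right ?_ h2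
        simp at h1; linarith)
      have h2 := S_mul (S_quad x 0) this
      rw [show 2 + (n - 2) = n by omega] at h2
      convert h2 using 1
      rw [hH, hK]; simp; ring
  · obtain ⟨H, hH⟩ := Polynomial.quadratic_dvd_of_aeval_eq_zero_im_ne_zero G hz' him
    have hn : ‖z‖ ^ 2 = z.re ^ 2 + z.im ^ 2 := by
      rw [Complex.sq_norm, Complex.normSq_apply]; ring
    have hq : (X ^ 2 - C (2 * z.re) * X + C (‖z‖ ^ 2) : ℝ[X]) = (X - C z.re) ^ 2 + C z.im ^ 2 := by
      rw [hn]; simp only [map_mul, map_add, map_pow, map_ofNat]; ring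
    have hqd : (X ^ 2 - C (2 * z.re) * X + C (‖z‖ ^ 2) : ℝ[X]).natDegree = 2 := by compute_degree!
    have hH0 : H ≠ 0 := by rintro rfl; simp at hH; exact hG0 hH
    have hHd : H.natDegree + 2 = G.natDegree := by
      rw [hH, natDegree_mul (by intro h; rw [h] at hqd; simp at hqd) hH0, hqd]; ring
    rw [hq] at hH
    have := ih (n - 2) (by omega) H (by omega) (fun y hy => by
      have h1 := hG y hy
      rw [hH] at h1
      simp at h1
      exact nonneg_of_mul_nonneg_right h1 (by positivity))
    have h2 := S_mul (S_quad z.re z.im) this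
    rw [show 2 + (n - 2) = n by omega] at h2
    convert h2 using 1
    rw [hH]; simp

theorem coeff_comp_neg {R : Type*} [CommRing R] (p : R[X]) (n : ℕ) :
    (p.comp (-X)).coeff n = (-1) ^ n * p.coeff n := by
  have : (-X : R[X]) = C (-1) * X := by simp
  rw [this, comp_C_mul_X_coeff, mul_comm]

theorem coeff_zero_of_parity {R : Type*} [Field R] [CharZero R] {p : R[X]} {q n : ℕ}
    (h : p.comp (-X) = (-1) ^ q * p) (hn : (q + n) % 2 = 1) : p.coeff n = 0 := by
  have h1 := coeff_comp_neg p n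
  rw [h, show ((-1 : R[X]) ^ q) = C ((-1) ^ q) by simp, coeff_C_mul] at h1
  have h2 : ((-1 : R) ^ q) * (-1) ^ n = -1 := by
    rw [← pow_add]; exact Odd.neg_one_pow (Nat.odd_iff.mpr hn)
  have h3 : ((-1 : R) ^ n) * (-1) ^ n = 1 := by
    rw [← mul_pow]; simp
  have h4 : p.coeff n = - p.coeff n := by
    linear_combination (-1 : R) ^ n * (-h1) - (p.coeff n) * h3 + p.coeff n * h2
  exact self_eq_neg.mp h4

noncomputable def qsp (Φ : ℕ → ℝ) : ℕ → ℂ[X] × ℂ[X]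
  | 0 => (1, 0)
  | n + 1 =>
    let e := C (Complex.exp (Complex.I * Φ (n + 1)))
    let e' := C (Complex.exp (-(Complex.I * Φ (n + 1))))
    (e * (qsp Φ n).1 * X + e' * (qsp Φ n).2 * (1 - X ^ 2),
      e * (qsp Φ n).1 - e' * (qsp Φ n).2 * X)

theorem qsp_congr (Φ Ψ : ℕ → ℝ) (n : ℕ) (h : ∀ i ≤ n, Φ i = Ψ i) : qsp Φ n = qsp Ψ n := by
  induction n with
  | zero => rfl
  | succ n ih =>
    simp only [qsp]
    rw [ih fun i hi => h i (by omega), h (n + 1) le_rfl]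

theorem exists_phase (a b : ℂ) (h : ‖a‖ = ‖b‖) : ∃ θ : ℝ,
    Complex.exp (-(Complex.I * θ)) * a = Complex.exp (Complex.I * θ) * b := by
  refine ⟨(a.arg - b.arg) / 2, ?_⟩
  have ha := Complex.norm_mul_exp_arg_mul_I a
  have hb := Complex.norm_mul_exp_arg_mul_I b
  generalize a.arg = s at *
  generalize b.arg = t at *
  rw [← ha]
  conv_rhs => rw [← hb]
  rw [h, mul_left_comm, mul_left_comm (Complex.exp _) (‖b‖ : ℂ), ← Complex.exp_add, ← Complex.exp_add]
  congr 2
  push_cast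
  ring

theorem norm_eq_of_mul_conj {a b : ℂ} (h : a * (starRingEnd ℂ) a = b * (starRingEnd ℂ) b) : ‖a‖ = ‖b‖ := by
  rw [Complex.mul_conj, Complex.mul_conj] at h
  have h' : Complex.normSq a = Complex.normSq b := by exact_mod_cast h
  rw [Complex.norm_def, Complex.norm_def, h']

theorem qsp_exists (q : ℕ) : ∀ p r : ℂ[X], p.natDegree ≤ q → (X * r).natDegree ≤ q →
    p.comp (-X) = (-1) ^ q * p → r.comp (-X) = -((-1) ^ q * r) →
    p * p.map (starRingEnd ℂ) + (1 - X ^ 2) * (r * r.map (starRingEnd ℂ)) = 1 →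
    ∃ (Φ : ℕ → ℝ) (θ : ℝ), p = C (Complex.exp (Complex.I * θ)) * (qsp Φ q).1 ∧
      r = C (Complex.exp (-(Complex.I * θ))) * (qsp Φ q).2 := by
  induction q with
  | zero =>
    intro p r hp hr _ _ h
    have hr0 : r = 0 := by
      by_contra h0
      rw [natDegree_X_mul h0] at hr; omega
    obtain ⟨c, rfl⟩ := natDegree_eq_zero.mp (Nat.le_zero.mp hp)
    subst hr0
    have hc : ‖c‖ = ‖(1 : ℂ)‖ := by
      apply norm_eq_of_mul_conj
      have := congrArg (eval 0) h
      simpa using this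
    refine ⟨fun _ => 0, c.arg, ?_, by simp [qsp]⟩
    have := Complex.norm_mul_exp_arg_mul_I c
    rw [hc] at this
    simp [qsp]
    rw [mul_comm]
    simpa using this.symm
  | succ q ih =>
    intro p r hp hr pp pr h
    have hdr : ∀ n, q < n → r.coeff n = 0 := by
      intro n hn
      rw [← coeff_X_mul]
      exact coeff_eq_zero_of_natDegree_lt (by omega)
    have hdp : ∀ n, q + 1 < n → p.coeff n = 0 := fun n hn =>
      coeff_eq_zero_of_natDegree_lt (by omega)
    have hab : ‖p.coeff (q + 1)‖ = ‖r.coeff q‖ := by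
      apply norm_eq_of_mul_conj
      have h1 : p * p.map (starRingEnd ℂ) + r * r.map (starRingEnd ℂ)
          - (X * r) * (X * r).map (starRingEnd ℂ) = 1 := by
        rw [← h]; simp; ring
      have h2 := congrArg (coeff · ((q + 1) + (q + 1))) h1
      have hrd : r.natDegree ≤ q := natDegree_le_iff_coeff_eq_zero.mpr hdr
      have hmr : (r * r.map (starRingEnd ℂ)).natDegree ≤ q + q :=
        natDegree_mul_le.trans (by rw [natDegree_map]; omega)
      simp only [coeff_sub, coeff_add] at h2
      rw [coeff_mul_add_eq_of_natDegree_le hp (by rwa [natDegree_map]),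
        coeff_mul_add_eq_of_natDegree_le hr (by rwa [natDegree_map]),
        coeff_eq_zero_of_natDegree_lt (lt_of_le_of_lt hmr (by omega)), coeff_map, coeff_map,
        coeff_X_mul, coeff_one] at h2
      simp at h2
      linear_combination h2
    obtain ⟨θ, hθ⟩ := exists_phase _ _ hab
    set e := Complex.exp (Complex.I * θ) with he
    set e' := Complex.exp (-(Complex.I * θ)) with he'
    have hee : e * e' = 1 := by rw [he, he', ← Complex.exp_add]; simp
    have hce : (starRingEnd ℂ) e = e' := by
      rw [he, he', ← Complex.exp_conj]; simp
    have hce' : (starRingEnd ℂ) e' = e := by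
      rw [← hce]; simp
    have hCe : C e * C e' = (1 : ℂ[X]) := by rw [← C_mul, hee, C_1]
    set p1 := X * (C e' * p) + (1 - X ^ 2) * (C e * r) with hp1
    set r1 := C e' * p - X * (C e * r) with hr1
    have pp1 : p1.comp (-X) = (-1) ^ q * p1 := by
      simp [hp1, pp, pr]; ring
    have pr1 : r1.comp (-X) = -((-1) ^ q * r1) := by
      simp [hr1, pp, pr]; ring
    have cr1 : ∀ n, q < n → r1.coeff n = 0 := by
      intro n hn
      obtain ⟨n, rfl⟩ : ∃ k, n = k + 1 := ⟨n - 1, by omega⟩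
      rw [hr1, coeff_sub, coeff_X_mul, coeff_C_mul, coeff_C_mul]
      by_cases hnq : n = q
      · rw [hnq, hθ]; ring
      · rw [hdp _ (by omega), hdr _ (by omega)]; ring
    have cr2 : r1.coeff q = 0 := by
      refine coeff_zero_of_parity (q := q + 1) ?_ (by omega)
      rw [pr1]; ring
    have hdr1 : (X * r1).natDegree ≤ q := by
      rw [natDegree_le_iff_coeff_eq_zero]
      intro n hn
      obtain ⟨n, rfl⟩ : ∃ k, n = k + 1 := ⟨n - 1, by omega⟩
      rw [coeff_X_mul]
      by_cases hnq : n = q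
      · rw [hnq, cr2]
      · exact cr1 n (by omega)
    have hdp1 : p1.natDegree ≤ q := by
      have : p1 = X * r1 + C e * r := by rw [hp1, hr1]; ring
      rw [this]
      refine (natDegree_add_le _ _).trans (max_le hdr1 ?_)
      exact (natDegree_C_mul_le _ _).trans (natDegree_le_iff_coeff_eq_zero.mpr hdr)
    have hn1 : p1 * p1.map (starRingEnd ℂ) + (1 - X ^ 2) * (r1 * r1.map (starRingEnd ℂ)) = 1 := by
      simp only [hp1, hr1, Polynomial.map_add, Polynomial.map_sub, Polynomial.map_mul, map_X, map_C,
        Polynomial.map_pow, Polynomial.map_one, hce, hce']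
      linear_combination h + (p * p.map (starRingEnd ℂ) + (1 - X ^ 2) * (r * r.map (starRingEnd ℂ))) * hCe
    obtain ⟨Φ, θ', hΦ1, hΦ2⟩ := ih p1 r1 hdp1 hdr1 pp1 pr1 hn1
    let Ψ : ℕ → ℝ := fun i => if i = q + 1 then θ' else Φ i
    have hΨ : qsp Ψ q = qsp Φ q := qsp_congr _ _ _ fun i hi => by
      simp only [Ψ]; rw [if_neg (by omega)]
    have hΨ' : Ψ (q + 1) = θ' := by simp [Ψ]
    refine ⟨Ψ, θ, ?_, ?_⟩
    · simp only [qsp, hΨ, hΨ', ← hΦ1, ← hΦ2, ← he]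
      rw [hp1, hr1]
      linear_combination (-p) * hCe
    · simp only [qsp, hΨ, hΨ', ← hΦ1, ← hΦ2, ← he']
      rw [hp1, hr1]
      linear_combination (-r) * hCe

theorem qsp_shift (Φ : ℕ → ℝ) (θ : ℝ) (q : ℕ) (hq : 1 ≤ q) :
    qsp (fun i => if i = 1 then Φ 1 + θ else Φ i) q =
      (C (Complex.exp (Complex.I * θ)) * (qsp Φ q).1,
       C (Complex.exp (Complex.I * θ)) * (qsp Φ q).2) := by
  induction q, hq using Nat.le_induction with
  | base =>
    simp [qsp, mul_add, Complex.exp_add]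
    constructor <;> ring
  | succ n hn ih =>
    rw [qsp, ih]
    simp only [qsp]
    rw [if_neg (by omega)]
    refine Prod.ext ?_ ?_ <;> simp only <;> ring

theorem qsp_neg (Φ : ℕ → ℝ) (q : ℕ) :
    qsp (fun i => -(Φ i)) q = ((qsp Φ q).1.map (starRingEnd ℂ), (qsp Φ q).2.map (starRingEnd ℂ)) := by
  induction q with
  | zero => simp [qsp]
  | succ n ih =>
    simp [qsp, ih, ← Complex.exp_conj]

theorem exists_real (q : ℕ) (hq : 1 ≤ q) (P : Polynomial ℝ)
    (hdeg : P.natDegree ≤ q)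
    (hpar : ∀ x : ℝ, P.eval (-x) = (-1 : ℝ) ^ q * P.eval x)
    (hbound : ∀ x ∈ Set.Icc (-1 : ℝ) 1, |P.eval x| ≤ 1) :
    ∃ Φ : ℕ → ℝ, (qsp Φ q).1 + (qsp (fun i => -(Φ i)) q).1 = 2 * P.map (algebraMap ℝ ℂ) := by
  have hP : P.comp (-X) = (-1) ^ q * P := by
    apply Polynomial.funext
    intro x
    simp [eval_comp, hpar]
  set F := 1 - P ^ 2 with hF
  have hFp : F.comp (-X) = (-1) ^ 0 * F := by
    simp only [hF, sub_comp, pow_comp, hP, one_comp]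
    rw [mul_pow, ← pow_mul, mul_comm q, pow_mul]; simp
  set G := contract 2 F with hG
  have hGF : expand ℝ 2 G = F := by
    ext n
    rw [coeff_expand (by norm_num)]
    split_ifs with h
    · rw [coeff_contract (by norm_num), Nat.div_mul_cancel h]
    · exact (coeff_zero_of_parity hFp (by omega)).symm
  have hGd : G.natDegree ≤ q := by
    have h1 := natDegree_expand 2 G
    have h2 : F.natDegree ≤ 2 * q := by
      refine (natDegree_sub_le _ _).trans (max_le (by simp) (natDegree_pow_le.trans ?_))
      omega
    rw [hGF] at h1
    omega
  have hGn : ∀ y ∈ Set.Icc (0 : ℝ) 1, 0 ≤ G.eval y := by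
    intro y hy
    have h1 := expand_eval 2 G (√y)
    rw [Real.sq_sqrt hy.1] at h1
    rw [← h1, hGF, hF]
    have h2 := hbound √y ⟨by linarith [Real.sqrt_nonneg y], Real.sqrt_le_one.mpr hy.2⟩
    have h3 := (sq_le_one_iff_abs_le_one _).mpr h2
    simpa using h3
  obtain ⟨B, D, h1, h2, h3, h4, h5⟩ := S_main q G hGd hGn
  rw [← expand_eq_comp_X_pow, hGF, hF] at h5
  set f := algebraMap ℝ ℂ with hf
  have hconj : ∀ R : ℝ[X], (R.map f).map (starRingEnd ℂ) = R.map f := by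
    intro R
    rw [Polynomial.map_map]; congr 1; ext x; simp [hf]
  have h3' : (B.map f).comp (-X) = (-1) ^ q * B.map f := by
    have := congrArg (Polynomial.map f) h3
    simpa [Polynomial.map_comp] using this
  have hP' : (P.map f).comp (-X) = (-1) ^ q * P.map f := by
    have := congrArg (Polynomial.map f) hP
    simpa [Polynomial.map_comp] using this
  have h4' : (D.map f).comp (-X) = -((-1) ^ q * D.map f) := by
    have := congrArg (Polynomial.map f) h4
    simpa [Polynomial.map_comp] using this
  have h5' : 1 - (P.map f) ^ 2 = (B.map f) ^ 2 + (1 - X ^ 2) * (D.map f) ^ 2 := by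
    have := congrArg (Polynomial.map f) h5
    simpa using this
  have hI : (C Complex.I) ^ 2 = (-1 : ℂ[X]) := by rw [← C_pow, Complex.I_sq]; simp
  obtain ⟨Φ, θ, hΦ, -⟩ := qsp_exists q (P.map f + C Complex.I * B.map f) (D.map f)
    ((natDegree_add_le _ _).trans (max_le (by rwa [natDegree_map])
      ((natDegree_C_mul_le _ _).trans (by rwa [natDegree_map]))))
    (by
      have : X * D.map f = (X * D).map f := by simp
      rwa [this, natDegree_map])
    (by simp only [add_comp, mul_comp, C_comp, hP', h3']; ring) h4'
    (by
      simp only [Polynomial.map_add, Polynomial.map_mul, hconj, map_C, Complex.conj_I, C_neg]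
      linear_combination (-1 : ℂ[X]) * h5' - (B.map f) ^ 2 * hI)
  refine ⟨fun i => if i = 1 then Φ 1 + θ else Φ i, ?_⟩
  rw [qsp_neg, qsp_shift _ _ _ hq]
  simp only
  rw [← hΦ]
  simp only [Polynomial.map_add, Polynomial.map_mul, hconj, map_C, Complex.conj_I, C_neg]
  ring
def Vv {ι : Type*} (V W : Matrix ι ι ℂ) (n : ℕ) : Matrix ι ι ℂ := if n % 2 = 0 then V else W

noncomputable def Ts (m N : ℕ) (V W : Matrix (Fin (2 ^ m) × Fin N) (Fin (2 ^ m) × Fin N) ℂ)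
    (Φ : ℕ → ℝ) : ℕ → Matrix (Fin (2 ^ m) × Fin N) (Fin (2 ^ m) × Fin N) ℂ
  | 0 => 1
  | n + 1 => Ts m N V W Φ n * phaseOp m N (Φ (n + 1)) * Vv V W n

theorem Vv_even {ι : Type*} (V W : Matrix ι ι ℂ) (k : ℕ) : Vv V W (2 * k) = V := by
  simp [Vv]

theorem Vv_odd {ι : Type*} (V W : Matrix ι ι ℂ) (k : ℕ) : Vv V W (2 * k + 1) = W := by
  unfold Vv
  rw [if_neg (by omega)]

theorem alt_even (m N : ℕ) (U : Matrix (Fin (2 ^ m) × Fin N) (Fin (2 ^ m) × Fin N) ℂ)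
    (k : ℕ) (Φ : ℕ → ℝ) : altPhaseSeq m N U (2 * k) Φ = Ts m N Uᴴ U Φ (2 * k) := by
  rw [altPhaseSeq, if_neg (by omega), Nat.mul_div_cancel_left _ (by norm_num)]
  induction k with
  | zero => simp [Ts]
  | succ k ih =>
    rw [List.range_succ, List.map_append, List.prod_append, ih, show 2 * (k + 1) = 2 * k + 1 + 1 by ring]
    simp only [Ts, Vv_even, Vv_odd]
    simp [Matrix.mul_assoc]

theorem alt_odd (m N : ℕ) (U : Matrix (Fin (2 ^ m) × Fin N) (Fin (2 ^ m) × Fin N) ℂ)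
    (k : ℕ) (Φ : ℕ → ℝ) : altPhaseSeq m N U (2 * k + 1) Φ = Ts m N U Uᴴ Φ (2 * k + 1) := by
  rw [altPhaseSeq, if_pos (by omega), Nat.add_sub_cancel, Nat.mul_div_cancel_left _ (by norm_num)]
  induction k with
  | zero => simp [Ts, Vv]
  | succ k ih =>
    rw [List.range_succ, List.map_append, List.prod_append, ← Matrix.mul_assoc, ih,
      show 2 * (k + 1) + 1 = 2 * k + 1 + 1 + 1 by ring]
    have e1 : Ts m N U Uᴴ Φ (2 * k + 1 + 1 + 1) = Ts m N U Uᴴ Φ (2 * k + 1) *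
      phaseOp m N (Φ (2 * k + 2)) * Vv U Uᴴ (2 * k + 1) *
      phaseOp m N (Φ (2 * k + 3)) * Vv U Uᴴ (2 * (k + 1)) := rfl
    rw [e1, Vv_odd, Vv_even]
    simp only [List.map_cons, List.map_nil, List.prod_cons, List.prod_nil, Matrix.mul_assoc,
      Matrix.mul_one]

def Jm (m N : ℕ) : Matrix (Fin N) (Fin (2 ^ m) × Fin N) ℂ :=
  Matrix.of fun j x => if x.1 = 0 ∧ x.2 = j then 1 else 0

theorem Jm_mul (m N : ℕ) {ι : Type*} (M : Matrix (Fin (2 ^ m) × Fin N) ι ℂ) (j : Fin N) (x : ι) :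
    (Jm m N * M) j x = M (0, j) x := by
  rw [Matrix.mul_apply, Finset.sum_eq_single (0, j)]
  · simp [Jm]
  · rintro ⟨a, b⟩ _ h
    simp only [Jm, Matrix.of_apply]
    rw [if_neg (by rintro ⟨rfl, rfl⟩; exact h rfl), zero_mul]
  · simp

theorem mul_JmT (m N : ℕ) {ι : Type*} (M : Matrix ι (Fin (2 ^ m) × Fin N) ℂ) (j : Fin N) (x : ι) :
    (M * (Jm m N)ᵀ) x j = M x (0, j) := by
  rw [Matrix.mul_apply, Finset.sum_eq_single (0, j)]
  · simp [Jm]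
  · rintro ⟨a, b⟩ _ h
    simp only [Jm, Matrix.of_apply, Matrix.transpose_apply]
    rw [if_neg (by rintro ⟨rfl, rfl⟩; exact h rfl), mul_zero]
  · simp

theorem Jm_JmT (m N : ℕ) : Jm m N * (Jm m N)ᵀ = 1 := by
  ext j k
  rw [mul_JmT]
  simp [Jm, Matrix.one_apply, eq_comm]

theorem Proj0_eq (m N : ℕ) : Proj0 m N = (Jm m N)ᵀ * Jm m N := by
  ext x y
  simp only [Proj0, Jm, Matrix.mul_apply, Matrix.of_apply, Matrix.transpose_apply]
  rw [Finset.sum_eq_single x.2]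
  · by_cases h1 : x.1 = 0 <;> by_cases h2 : y.1 = 0 <;> simp [h1, h2, eq_comm]
  · intro b _ hb
    rw [if_neg (fun h => hb h.2.symm), zero_mul]
  · simp

theorem Jm_Proj0 (m N : ℕ) : Jm m N * Proj0 m N = Jm m N := by
  rw [Proj0_eq, ← Matrix.mul_assoc, Jm_JmT, Matrix.one_mul]

theorem Proj0_JmT (m N : ℕ) : Proj0 m N * (Jm m N)ᵀ = (Jm m N)ᵀ := by
  rw [Proj0_eq, Matrix.mul_assoc, Jm_JmT, Matrix.mul_one]

theorem Proj0_sq (m N : ℕ) : Proj0 m N * Proj0 m N = Proj0 m N := by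
  rw [Proj0_eq, Matrix.mul_assoc, ← Matrix.mul_assoc (Jm m N), Jm_JmT, Matrix.one_mul]

theorem phase_row (m N : ℕ) (φ : ℝ) : Jm m N * phaseOp m N φ = Complex.exp (Complex.I * φ) • Jm m N := by
  rw [phaseOp, Matrix.mul_add, Matrix.mul_smul, Matrix.mul_smul, Matrix.mul_sub, Jm_Proj0]
  simp

theorem phase_row' (m N : ℕ) (φ : ℝ) : (1 - Proj0 m N) * phaseOp m N φ =
    Complex.exp (-(Complex.I * φ)) • (1 - Proj0 m N) := by
  have h := Proj0_sq m N
  have h1 : (1 - Proj0 m N) * Proj0 m N = 0 := by rw [sub_mul, h]; simp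
  have h2 : (1 - Proj0 m N) * (1 - Proj0 m N) = 1 - Proj0 m N := by rw [mul_sub, h1]; simp
  rw [phaseOp, Matrix.mul_add, Matrix.mul_smul, Matrix.mul_smul, h1, h2]
  simp

theorem row_step (m N : ℕ) (V W : Matrix (Fin (2 ^ m) × Fin N) (Fin (2 ^ m) × Fin N) ℂ)
    (A : Matrix (Fin N) (Fin N) ℂ) (hVW : V * W = 1)
    (hV : Jm m N * V * (Jm m N)ᵀ = A) (hW : Jm m N * W * (Jm m N)ᵀ = A)
    (φ : ℝ) (p r : Matrix (Fin N) (Fin N) ℂ) :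
    (p * Jm m N + r * (Jm m N * V * (1 - Proj0 m N))) * phaseOp m N φ * W =
    (Complex.exp (Complex.I * φ) • (p * A) + Complex.exp (-(Complex.I * φ)) • (r * (1 - A * A))) * Jm m N +
    (Complex.exp (Complex.I * φ) • p - Complex.exp (-(Complex.I * φ)) • (r * A)) *
      (Jm m N * W * (1 - Proj0 m N)) := by
  set J := Jm m N
  set e := Complex.exp (Complex.I * φ)
  set e' := Complex.exp (-(Complex.I * φ))
  have a1 : J * W = A * J + J * W * (1 - Proj0 m N) := by
    rw [Matrix.mul_sub, Matrix.mul_one, Proj0_eq, ← Matrix.mul_assoc, hW]; abel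
  have a2 : J * V * (1 - Proj0 m N) * W = J - A * (J * W) := by
    rw [Matrix.mul_sub, Matrix.mul_one, Proj0_eq, ← Matrix.mul_assoc, hV, Matrix.sub_mul,
      Matrix.mul_assoc J V W, hVW, Matrix.mul_one, Matrix.mul_assoc]
  have a3 : (p * J + r * (J * V * (1 - Proj0 m N))) * phaseOp m N φ * W =
      e • (p * (J * W)) + e' • (r * (J * V * (1 - Proj0 m N) * W)) := by
    rw [Matrix.add_mul, Matrix.mul_assoc p, phase_row, Matrix.mul_assoc r, Matrix.mul_assoc (J * V),
      phase_row']
    simp only [Matrix.mul_smul, Matrix.smul_mul, Matrix.add_mul, Matrix.mul_assoc]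
    rfl
  rw [a3, a2]
  set K := J * W * (1 - Proj0 m N)
  rw [a1]
  simp only [Matrix.mul_add, Matrix.add_mul, Matrix.mul_sub, Matrix.sub_mul, Matrix.smul_mul, 
    smul_add, smul_sub, Matrix.mul_assoc, Matrix.mul_one, Matrix.one_mul]
  abel

theorem Vv_add_two {ι : Type*} (V W : Matrix ι ι ℂ) (n : ℕ) : Vv V W (n + 2) = Vv V W n := by
  simp [Vv]

theorem row_main (m N : ℕ) (V W : Matrix (Fin (2 ^ m) × Fin N) (Fin (2 ^ m) × Fin N) ℂ)
    (A : Matrix (Fin N) (Fin N) ℂ) (hVW : V * W = 1) (hWV : W * V = 1)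
    (hV : Jm m N * V * (Jm m N)ᵀ = A) (hW : Jm m N * W * (Jm m N)ᵀ = A) (Φ : ℕ → ℝ) (n : ℕ) :
    Jm m N * Ts m N V W Φ n = aeval A (qsp Φ n).1 * Jm m N +
      aeval A (qsp Φ n).2 * (Jm m N * Vv V W (n + 1) * (1 - Proj0 m N)) := by
  induction n with
  | zero => simp [Ts, qsp]
  | succ n ih =>
    have h1 : Vv V W (n + 1) * Vv V W n = 1 := by
      rcases Nat.mod_two_eq_zero_or_one n with h | h <;>
        simp [Vv, h, Nat.add_mod, hVW, hWV]
    have h2 : ∀ k, Jm m N * Vv V W k * (Jm m N)ᵀ = A := by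
      intro k; unfold Vv; split_ifs <;> assumption
    rw [Ts, ← Matrix.mul_assoc, ← Matrix.mul_assoc, ih,
      row_step m N _ _ A h1 (h2 _) (h2 _), Vv_add_two]
    simp only [qsp, map_add, map_sub, map_mul, aeval_C, aeval_X, map_one, map_pow, sq,
      Algebra.algebraMap_eq_smul_one, smul_mul_assoc, one_mul]

theorem compress_main (m N : ℕ) (V W : Matrix (Fin (2 ^ m) × Fin N) (Fin (2 ^ m) × Fin N) ℂ)
    (A : Matrix (Fin N) (Fin N) ℂ) (hVW : V * W = 1) (hWV : W * V = 1)
    (hV : Jm m N * V * (Jm m N)ᵀ = A) (hW : Jm m N * W * (Jm m N)ᵀ = A) (Φ : ℕ → ℝ) (n : ℕ)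
    (j k : Fin N) :
    Ts m N V W Φ n (0, j) (0, k) = aeval A (qsp Φ n).1 j k := by
  rw [← mul_JmT m N (Ts m N V W Φ n) k (0, j), ← Jm_mul m N (Ts m N V W Φ n * (Jm m N)ᵀ) j k, ← Matrix.mul_assoc, row_main m N V W A hVW hWV hV hW, Matrix.add_mul,
    Matrix.mul_assoc, Jm_JmT, Matrix.mul_one, Matrix.mul_assoc, Matrix.mul_assoc, Matrix.sub_mul,
    Proj0_JmT]
  simp

end Helpers

/-- singular value transformation by real polynomials. If
the compression `A` of a unitary `U` onto the all-zeros ancilla state is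
Hermitian, and `P` is a real polynomial of degree at most `q`, parity `q mod 2`,
bounded by `1` on `[−1,1]`, then there are phases `Φ ∈ ℝ^q` such that the
compression of `(1/2)(U_Φ + U_{−Φ})` equals `P(A)`. -/
theorem exists_phases_qsvt (m N : ℕ) (hm : 1 ≤ m) (hN : 1 ≤ N)
    (U : Matrix (Fin (2 ^ m) × Fin N) (Fin (2 ^ m) × Fin N) ℂ)
    (hU₁ : U * Uᴴ = 1) (hU₂ : Uᴴ * U = 1)
    (A : Matrix (Fin N) (Fin N) ℂ)
    (hA : ∀ j k : Fin N, A j k = U ((0 : Fin (2 ^ m)), j) ((0 : Fin (2 ^ m)), k))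
    (hHerm : A.IsHermitian)
    (q : ℕ) (hq : 1 ≤ q) (P : Polynomial ℝ)
    (hdeg : P.natDegree ≤ q)
    (hpar : ∀ x : ℝ, P.eval (-x) = (-1 : ℝ) ^ q * P.eval x)
    (hbound : ∀ x ∈ Set.Icc (-1 : ℝ) 1, |P.eval x| ≤ 1) :
    ∃ Φ : ℕ → ℝ,
      (Matrix.of fun j k : Fin N =>
        ((1 / 2 : ℂ) •
          (altPhaseSeq m N U q Φ + altPhaseSeq m N U q (fun i => -(Φ i))))
            ((0 : Fin (2 ^ m)), j) ((0 : Fin (2 ^ m)), k)) =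
      Polynomial.aeval A P := by
  obtain ⟨Φ, hΦ⟩ := exists_real q hq P hdeg hpar hbound
  refine ⟨Φ, ?_⟩
  have hJU : Jm m N * U * (Jm m N)ᵀ = A := by
    ext j k
    rw [mul_JmT, Jm_mul, hA]
  have hJU' : Jm m N * Uᴴ * (Jm m N)ᵀ = A := by
    ext j k
    rw [mul_JmT, Jm_mul, Matrix.conjTranspose_apply, ← hA, ← hHerm.apply j k]
  have key : ∀ (Ψ : ℕ → ℝ) (j k : Fin N), altPhaseSeq m N U q Ψ (0, j) (0, k) =
      Polynomial.aeval A (qsp Ψ q).1 j k := by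
    intro Ψ j k
    rcases Nat.even_or_odd' q with ⟨t, rfl | rfl⟩
    · rw [alt_even, compress_main m N _ _ A hU₂ hU₁ hJU' hJU]
    · rw [alt_odd, compress_main m N _ _ A hU₁ hU₂ hJU hJU']
  ext j k
  have h2 := congrArg (fun p => Polynomial.aeval A p j k) hΦ
  simp only [map_add, map_mul, Polynomial.aeval_map_algebraMap, map_ofNat, Matrix.add_apply] at h2
  have h3 : ((2 : Matrix (Fin N) (Fin N) ℂ) * Polynomial.aeval A P) j k = 2 * (Polynomial.aeval A P) j k := by
    rw [two_mul, Matrix.add_apply, two_mul]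
  rw [h3] at h2
  simp only [Matrix.of_apply, Matrix.smul_apply, Matrix.add_apply, key, smul_eq_mul]
  rw [h2]
  ring

end QSVT
end
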